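/- Let T > 0, let g : [0,∞) → [0,∞) be continuously differentiable with g(0) = 0, g(s) > 0 and g'(s) > 0 for all s > 0, lim_{s→0⁺} g(s)/s = 0 and lim_{s→+∞} g(s)/s = +∞. Let a ∈ L¹([0,T]) satisfy (a1). Then the equation u'' + a(x) g(u) = 0 has a positive solution satisfying the Neumann boundary conditions if and only if ∫₀ᵀ a(x) dx < 0, and it has a positive solution satisfying the periodic boundary conditions if and only if ∫₀ᵀ a(x) dx < 0. -/

import Mathlib

open MeasureTheory Set Filter

/-- `u` (with derivative `u'`) is a C¹ solution of `u'' + f(x) = 0` on `[0,T]`: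
`u'` is absolutely continuous and the equation holds a.e., expressed via the
integral equation `u'(x) = u'(0) − ∫₀ˣ f(t) dt`. -/
def IsSolOn (T : ℝ) (f : ℝ → ℝ) (u u' : ℝ → ℝ) : Prop :=
  (∀ x ∈ Icc (0:ℝ) T, HasDerivWithinAt u (u' x) (Icc (0:ℝ) T) x) ∧
  ContinuousOn u' (Icc (0:ℝ) T) ∧
  ∀ x ∈ Icc (0:ℝ) T, u' x = u' 0 - ∫ t in (0:ℝ)..x, f t

/-- The equation `u'' + a(x) g(u) = 0` on `[0,T]` has a positive solution
satisfying the Neumann boundary conditions. -/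
def PosSolNeumann (T : ℝ) (a g : ℝ → ℝ) : Prop :=
  ∃ u u' : ℝ → ℝ, IsSolOn T (fun t => a t * g (u t)) u u' ∧
    (∀ x ∈ Icc (0:ℝ) T, 0 < u x) ∧ u' 0 = 0 ∧ u' T = 0

/-- The equation `u'' + a(x) g(u) = 0` on `[0,T]` has a positive solution
satisfying the periodic boundary conditions. -/
def PosSolPeriodic (T : ℝ) (a g : ℝ → ℝ) : Prop :=
  ∃ u u' : ℝ → ℝ, IsSolOn T (fun t => a t * g (u t)) u u' ∧
    (∀ x ∈ Icc (0:ℝ) T, 0 < u x) ∧ u 0 = u T ∧ u' 0 = u' T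

/-- Condition (a1): there are `m ≥ 1` pairwise disjoint closed intervals in `[0,T]`
on which `a ≥ 0` a.e. and `a` is not a.e. zero, while `a ≤ 0` a.e. outside them. -/
def CondA1 (T : ℝ) (a : ℝ → ℝ) : Prop :=
  ∃ (m : ℕ) (σ τ : Fin m → ℝ), 0 < m ∧
    (∀ i, 0 ≤ σ i ∧ σ i ≤ τ i ∧ τ i ≤ T) ∧
    (Pairwise fun i j => Disjoint (Icc (σ i) (τ i)) (Icc (σ j) (τ j))) ∧
    (∀ i, ∀ᵐ x ∂(volume.restrict (Icc (σ i) (τ i))), 0 ≤ a x) ∧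
    (∀ i, ¬ (∀ᵐ x ∂(volume.restrict (Icc (σ i) (τ i))), a x = 0)) ∧
    (∀ᵐ x ∂(volume.restrict (Icc (0:ℝ) T \ ⋃ i, Icc (σ i) (τ i))), a x ≤ 0)



lemma aux_ibp {T : ℝ} {f q : ℝ → ℝ} (hf : IntervalIntegrable f volume 0 T)
    (hq : IntervalIntegrable q volume 0 T) :
    ∫ x in (0:ℝ)..T, f x * (∫ t in (0:ℝ)..x, q t) =
      (∫ x in (0:ℝ)..T, f x) * (∫ x in (0:ℝ)..T, q x)
        - ∫ x in (0:ℝ)..T, q x * (∫ t in (0:ℝ)..x, f t) := by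
  have hF := hf.absolutelyContinuousOnInterval_intervalIntegral (c := 0) (by simp)
  have hQ := hq.absolutelyContinuousOnInterval_intervalIntegral (c := 0) (by simp)
  have h := AbsolutelyContinuousOnInterval.integral_mul_deriv_eq_deriv_mul hF hQ
  have h1 : ∫ x in (0:ℝ)..T, f x * (∫ t in (0:ℝ)..x, q t)
      = ∫ x in (0:ℝ)..T, deriv (fun x => ∫ t in (0:ℝ)..x, f t) x * (∫ t in (0:ℝ)..x, q t) := by
    apply intervalIntegral.integral_congr_ae
    filter_upwards [hf.ae_hasDerivAt_integral] with x hx hx'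
    rw [(hx (uIoc_subset_uIcc hx') 0 (by simp)).deriv]
  have h2 : ∫ x in (0:ℝ)..T, q x * (∫ t in (0:ℝ)..x, f t)
      = ∫ x in (0:ℝ)..T, (∫ t in (0:ℝ)..x, f t) * deriv (fun x => ∫ t in (0:ℝ)..x, q t) x := by
    apply intervalIntegral.integral_congr_ae
    filter_upwards [hq.ae_hasDerivAt_integral] with x hx hx'
    rw [(hx (uIoc_subset_uIcc hx') 0 (by simp)).deriv, mul_comm]
  rw [h1, h2, h]
  simp

lemma aux_ftc {T : ℝ} {u p : ℝ → ℝ}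
    (hu : ∀ x ∈ Icc (0:ℝ) T, HasDerivWithinAt u (p x) (Icc (0:ℝ) T) x)
    (hp : ContinuousOn p (Icc (0:ℝ) T)) {x y : ℝ} (hx : x ∈ Icc 0 T) (hy : y ∈ Icc 0 T) :
    ∫ t in x..y, p t = u y - u x := by
  have hsub : uIcc x y ⊆ Icc 0 T := (ordConnected_Icc).uIcc_subset hx hy
  apply intervalIntegral.integral_eq_sub_of_hasDeriv_right
  · exact fun z hz => ((hu z (hsub hz)).continuousWithinAt).mono hsub
  · intro z hz
    have hz' : z ∈ Ioo 0 T := ⟨(le_min hx.1 hy.1).trans_lt hz.1, hz.2.trans_le (max_le hx.2 hy.2)⟩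
    exact ((hu z (Ioo_subset_Icc_self hz')).hasDerivAt (Icc_mem_nhds hz'.1 hz'.2)).hasDerivWithinAt
  · exact (hp.mono hsub).intervalIntegrable

lemma aux_weak {T : ℝ} (hT : 0 < T) {f u p φ φ' : ℝ → ℝ} (hs : IsSolOn T f u p)
    (hf : IntervalIntegrable f volume 0 T)
    (hφ : ∀ x ∈ Icc (0:ℝ) T, HasDerivWithinAt φ (φ' x) (Icc (0:ℝ) T) x)
    (hφ' : ContinuousOn φ' (Icc (0:ℝ) T)) :
    ∫ x in (0:ℝ)..T, f x * φ x = p 0 * φ 0 - p T * φ T + ∫ x in (0:ℝ)..T, p x * φ' x := by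
  have h0 : (0:ℝ) ∈ Icc 0 T := ⟨le_rfl, hT.le⟩
  have hTT : T ∈ Icc 0 T := ⟨hT.le, le_rfl⟩
  have hu : uIcc 0 T = Icc 0 T := uIcc_of_le hT.le
  have hq : IntervalIntegrable φ' volume 0 T := by
    apply ContinuousOn.intervalIntegrable; rwa [hu]
  have hpi : IntervalIntegrable (fun x => p x * φ' x) volume 0 T := by
    apply ContinuousOn.intervalIntegrable; rw [hu]; exact hs.2.1.mul hφ'
  have h := aux_ibp hf hq
  have e1 : ∫ x in (0:ℝ)..T, f x * φ x
      = ∫ x in (0:ℝ)..T, (φ 0 * f x + f x * (∫ t in (0:ℝ)..x, φ' t)) := by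
    apply intervalIntegral.integral_congr
    intro x hx
    rw [hu] at hx
    simp only [aux_ftc hφ hφ' h0 hx]
    ring
  have e2 : ∫ x in (0:ℝ)..T, φ' x * (∫ t in (0:ℝ)..x, f t)
      = ∫ x in (0:ℝ)..T, (p 0 * φ' x - p x * φ' x) := by
    apply intervalIntegral.integral_congr
    intro x hx
    rw [hu] at hx
    have := hs.2.2 x hx
    have : ∫ t in (0:ℝ)..x, f t = p 0 - p x := by linarith
    simp only [this]
    ring
  have hc : ContinuousOn (fun x => ∫ t in (0:ℝ)..x, φ' t) (uIcc 0 T) :=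
    intervalIntegral.continuousOn_primitive_interval' hq (by simp)
  rw [e1, intervalIntegral.integral_add (hf.const_mul _) (hf.mul_continuousOn hc), h, e2,
    intervalIntegral.integral_sub (hq.const_mul _) hpi, intervalIntegral.integral_const_mul,
    intervalIntegral.integral_const_mul, aux_ftc hφ hφ' h0 hTT]
  have := hs.2.2 T hTT
  have : ∫ t in (0:ℝ)..T, f t = p 0 - p T := by linarith
  rw [this]
  ring

/-- common form of the two boundary conditions -/
def BCond (T : ℝ) (u p : ℝ → ℝ) : Prop := p T = p 0 ∧ (p 0 = 0 ∨ u 0 = u T)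

lemma aux_cont {T : ℝ} {f u p : ℝ → ℝ} (hs : IsSolOn T f u p) : ContinuousOn u (Icc 0 T) :=
  fun x hx => (hs.1 x hx).continuousWithinAt

lemma aux_weakB {T : ℝ} (hT : 0 < T) {f u p ψ ψ' : ℝ → ℝ} (hs : IsSolOn T f u p)
    (hf : IntervalIntegrable f volume 0 T) (hB : BCond T u p)
    (hψ : ∀ x ∈ Icc (0:ℝ) T, HasDerivAt ψ (ψ' (u x)) (u x))
    (hψ' : ContinuousOn (fun x => ψ' (u x)) (Icc (0:ℝ) T)) :
    ∫ x in (0:ℝ)..T, f x * ψ (u x) = ∫ x in (0:ℝ)..T, ψ' (u x) * (p x)^2 := by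
  rw [aux_weak (φ := fun x => ψ (u x)) (φ' := fun x => ψ' (u x) * p x) hT hs hf
    (fun x hx => (hψ x hx).comp_hasDerivWithinAt x (hs.1 x hx)) (hψ'.mul hs.2.1)]
  have : p 0 * ψ (u 0) - p T * ψ (u T) = 0 := by
    rw [hB.1]
    rcases hB.2 with h | h <;> rw [h] <;> ring
  rw [this, zero_add]
  apply intervalIntegral.integral_congr
  intro x _
  simp only
  ring

lemma aux_int_a {T : ℝ} (hT : 0 < T) {a w : ℝ → ℝ} (ha : IntervalIntegrable a volume 0 T)
    (hw : ContinuousOn w (Icc 0 T)) : IntervalIntegrable (fun t => a t * w t) volume 0 T := by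
  apply ha.mul_continuousOn
  rwa [uIcc_of_le hT.le]

lemma aux_nonneg_zero {T : ℝ} (hT : 0 < T) {w : ℝ → ℝ} (hw : ContinuousOn w (Icc 0 T))
    (h0 : ∀ x ∈ Icc 0 T, 0 ≤ w x) (hi : ∫ x in (0:ℝ)..T, w x ≤ 0) : ∀ x ∈ Icc 0 T, w x = 0 := by
  by_contra! hcon
  obtain ⟨x, hx, hne⟩ := hcon
  have := intervalIntegral.integral_pos hT hw (fun y hy => h0 y (Ioc_subset_Icc_self hy))
    ⟨x, hx, lt_of_le_of_ne (h0 x hx) hne.symm⟩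
  linarith

lemma aux_exists_pos {T : ℝ} {a : ℝ → ℝ} (ha : IntervalIntegrable a volume 0 T)
    {σ τ : ℝ} (h0 : 0 ≤ σ) (hst : σ ≤ τ) (hτ : τ ≤ T)
    (hpos : ∀ᵐ x ∂(volume.restrict (Icc σ τ)), 0 ≤ a x)
    (hne : ¬ (∀ᵐ x ∂(volume.restrict (Icc σ τ)), a x = 0)) : 0 < ∫ x in σ..τ, a x := by
  have hi : IntervalIntegrable a volume σ τ := ha.mono_set (by
    rw [uIcc_of_le hst, uIcc_of_le (h0.trans (hst.trans hτ))]; exact Icc_subset_Icc h0 hτ)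
  have hpos0 := hpos
  rw [← restrict_Ioc_eq_restrict_Icc] at hpos hne
  rcases (intervalIntegral.integral_nonneg_of_ae_restrict hst hpos0).lt_or_eq with h | h
  · exact h
  · exfalso
    apply hne
    have hp' : 0 ≤ᵐ[volume.restrict (Ioc σ τ ∪ Ioc τ σ)] a := by
      rw [Ioc_eq_empty (not_lt.2 hst), union_empty]; exact hpos
    have := (intervalIntegral.integral_eq_zero_iff_of_nonneg_ae hp' hi).1 h.symm
    rw [Ioc_eq_empty (not_lt.2 hst), union_empty] at this
    exact this

lemma aux_necessity {T : ℝ} (hT : 0 < T) {g g' : ℝ → ℝ}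
    (hgpos : ∀ s : ℝ, 0 < s → 0 < g s)
    (hgd : ∀ s ∈ Ici (0:ℝ), HasDerivWithinAt g (g' s) (Ici (0:ℝ)) s)
    (hgdc : ContinuousOn g' (Ici (0:ℝ)))
    (hgdpos : ∀ s : ℝ, 0 < s → 0 < g' s)
    {a : ℝ → ℝ} (ha : IntervalIntegrable a volume 0 T) (ha1 : CondA1 T a)
    {u p : ℝ → ℝ} (hs : IsSolOn T (fun t => a t * g (u t)) u p)
    (hup : ∀ x ∈ Icc (0:ℝ) T, 0 < u x) (hB : BCond T u p) :
    (∫ x in (0:ℝ)..T, a x) < 0 := by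
  have hgd' : ∀ s, 0 < s → HasDerivAt g (g' s) s := fun s h =>
    (hgd s h.le).hasDerivAt (Ici_mem_nhds h)
  have huc := aux_cont hs
  have hgc : ContinuousOn g (Ici 0) := fun s h => (hgd s h).continuousWithinAt
  have hmap : MapsTo u (Icc 0 T) (Ici 0) := fun x hx => (hup x hx).le
  have hguc : ContinuousOn (fun x => g (u x)) (Icc 0 T) := hgc.comp huc hmap
  have hg'uc : ContinuousOn (fun x => g' (u x)) (Icc 0 T) := hgdc.comp huc hmap
  have hne : ∀ x ∈ Icc 0 T, g (u x) ≠ 0 := fun x hx => (hgpos _ (hup x hx)).ne'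
  have hw := aux_weakB (ψ := fun s => (g s)⁻¹) (ψ' := fun s => - g' s / (g s)^2) hT hs
    (aux_int_a hT ha hguc) hB (fun x hx => (hgd' _ (hup x hx)).fun_inv (hne x hx))
    (hg'uc.neg.div (hguc.pow 2) fun x hx => pow_ne_zero 2 (hne x hx))
  have e1 : ∫ x in (0:ℝ)..T, a x * g (u x) * (g (u x))⁻¹ = ∫ x in (0:ℝ)..T, a x := by
    apply intervalIntegral.integral_congr
    intro x hx
    rw [uIcc_of_le hT.le] at hx
    simp only
    rw [mul_assoc, mul_inv_cancel₀ (hne x hx), mul_one]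
  rw [e1] at hw
  set w : ℝ → ℝ := fun x => g' (u x) / (g (u x))^2 * (p x)^2 with hwd
  have hwc : ContinuousOn w (Icc 0 T) :=
    (hg'uc.div (hguc.pow 2) fun x hx => pow_ne_zero 2 (hne x hx)).mul (hs.2.1.pow 2)
  have hw0 : ∀ x ∈ Icc 0 T, 0 ≤ w x := fun x hx => by
    have := hgdpos _ (hup x hx)
    positivity
  have hw2 : ∫ x in (0:ℝ)..T, a x = - ∫ x in (0:ℝ)..T, w x := by
    rw [hw, ← intervalIntegral.integral_neg]
    congr 1; ext x; simp only [hwd]; ring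
  by_contra hcon
  have hz := aux_nonneg_zero hT hwc hw0 (by linarith)
  have hp0 : ∀ x ∈ Icc 0 T, p x = 0 := fun x hx => by
    have h1 := hz x hx
    have h2 : 0 < g' (u x) / (g (u x))^2 :=
      div_pos (hgdpos _ (hup x hx)) (pow_pos (hgpos _ (hup x hx)) 2)
    simp only [hwd] at h1
    rcases mul_eq_zero.1 h1 with h | h
    · exact absurd h h2.ne'
    · exact pow_eq_zero_iff (two_ne_zero) |>.1 h
  have h0m : (0:ℝ) ∈ Icc 0 T := ⟨le_rfl, hT.le⟩
  have hu0 : ∀ x ∈ Icc 0 T, u x = u 0 := fun x hx => by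
    have h1 := aux_ftc hs.1 hs.2.1 h0m hx
    have h2 : ∫ t in (0:ℝ)..x, p t = ∫ t in (0:ℝ)..x, (0:ℝ) := by
      apply intervalIntegral.integral_congr
      intro t ht
      rw [uIcc_of_le hx.1] at ht
      exact hp0 t ⟨ht.1, ht.2.trans hx.2⟩
    rw [h2] at h1
    simp at h1
    linarith
  have hint : ∀ x ∈ Icc 0 T, ∫ t in (0:ℝ)..x, a t = 0 := fun x hx => by
    have h1 := hs.2.2 x hx
    rw [hp0 x hx, hp0 0 h0m] at h1
    have h2 : ∫ t in (0:ℝ)..x, a t * g (u t) = ∫ t in (0:ℝ)..x, a t * g (u 0) := by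
      apply intervalIntegral.integral_congr
      intro t ht
      rw [uIcc_of_le hx.1] at ht
      simp only
      rw [hu0 t ⟨ht.1, ht.2.trans hx.2⟩]
    rw [h2, intervalIntegral.integral_mul_const] at h1
    have h3 := hne 0 h0m
    have h4 : (∫ t in (0:ℝ)..x, a t) * g (u 0) = 0 := by linarith
    exact (mul_eq_zero.1 h4).resolve_right h3
  obtain ⟨m, σ, τ, hm, hst, -, hpos, hnz, -⟩ := ha1
  let i : Fin m := ⟨0, hm⟩
  have hpi := aux_exists_pos ha (hst i).1 (hst i).2.1 (hst i).2.2 (hpos i) (hnz i)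
  have hm1 : σ i ∈ Icc 0 T := ⟨(hst i).1, (hst i).2.1.trans (hst i).2.2⟩
  have hm2 : τ i ∈ Icc 0 T := ⟨(hst i).1.trans (hst i).2.1, (hst i).2.2⟩
  have hsub : ∀ y ∈ Icc 0 T, IntervalIntegrable a volume 0 y := fun y hy =>
    ha.mono_set (by rw [uIcc_of_le hy.1, uIcc_of_le hT.le]; exact Icc_subset_Icc le_rfl hy.2)
  have := intervalIntegral.integral_add_adjacent_intervals (hsub _ hm1) ((hsub _ hm1).symm.trans (hsub _ hm2))
  rw [hint _ hm1, hint _ hm2] at this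
  linarith


lemma aux_deriv_sq (s : ℝ) : HasDerivAt (fun s : ℝ => (max s 0)^2) (2 * max s 0) s := by
  rcases lt_trichotomy s 0 with h | h | h
  · rw [max_eq_right h.le, mul_zero]
    apply (hasDerivAt_const s (0:ℝ)).congr_of_eventuallyEq
    filter_upwards [Iio_mem_nhds h] with y hy
    rw [max_eq_right (le_of_lt hy)]; norm_num
  · subst h
    simp only [max_self, mul_zero]
    rw [hasDerivAt_iff_isLittleO]
    simp only [max_self, sub_zero, smul_zero]
    norm_num
    have h1 : (fun x : ℝ => max x 0 ^ 2) =O[nhds 0] fun x => x^2 := by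
      apply Asymptotics.IsBigO.of_bound 1
      refine Eventually.of_forall fun x => ?_
      rw [Real.norm_eq_abs, Real.norm_eq_abs, abs_of_nonneg (by positivity), abs_of_nonneg (by positivity), one_mul]
      rcases le_total x 0 with hx | hx
      · rw [max_eq_right hx]; nlinarith
      · rw [max_eq_left hx]
    refine h1.trans_isLittleO ?_
    have := Asymptotics.isLittleO_pow_pow (𝕜 := ℝ) (m := 1) (n := 2) (by norm_num)
    simpa using this
  · rw [max_eq_left h.le]
    have h1 : HasDerivAt (fun s : ℝ => s^2) (2 * s) s := by simpa using hasDerivAt_pow 2 s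
    apply h1.congr_of_eventuallyEq
    filter_upwards [Ioi_mem_nhds h] with y hy
    rw [max_eq_left (le_of_lt hy)]

lemma aux_pos {T : ℝ} (hT : 0 < T) {a h u p : ℝ → ℝ} (ha : IntervalIntegrable a volume 0 T)
    (hc : Continuous h) (h0 : ∀ s ≤ 0, h s = 0)
    (hs : IsSolOn T (fun t => a t * h (u t) + max (-u t) 0) u p) (hB : BCond T u p) :
    ∀ x ∈ Icc 0 T, 0 ≤ u x := by
  have huc := aux_cont hs
  have hnc : ContinuousOn (fun t => max (-u t) 0) (Icc 0 T) := (continuous_neg.max continuous_const).comp_continuousOn huc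
  have hf : IntervalIntegrable (fun t => a t * h (u t) + max (-u t) 0) volume 0 T := by
    apply (aux_int_a hT ha (hc.comp_continuousOn huc)).add
    apply ContinuousOn.intervalIntegrable
    rwa [uIcc_of_le hT.le]
  have hd : ∀ s : ℝ, HasDerivAt (fun s : ℝ => -(max (-s) 0)^2) (2 * max (-s) 0) s := fun s => by
    have := ((aux_deriv_sq (-s)).comp s (hasDerivAt_neg s)).neg
    simp only [mul_neg, mul_one, neg_neg] at this
    exact this
  have hw := aux_weakB (ψ := fun s : ℝ => -(max (-s) 0)^2) (ψ' := fun s : ℝ => 2 * max (-s) 0) hT hs hf hB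
    (fun x _ => hd (u x)) (continuousOn_const.mul hnc)
  have e1 : ∫ x in (0:ℝ)..T, (a x * h (u x) + max (-u x) 0) * (-(max (-u x) 0)^2)
     = - ∫ x in (0:ℝ)..T, (max (-u x) 0)^3 := by
    rw [← intervalIntegral.integral_neg]
    congr 1; ext x
    rcases le_total (u x) 0 with hx | hx
    · rw [h0 _ hx]; ring
    · rw [max_eq_right (by linarith : -u x ≤ 0)]; ring
  rw [e1] at hw
  have h2 : 0 ≤ ∫ x in (0:ℝ)..T, 2 * max (-u x) 0 * (p x)^2 := by
    apply intervalIntegral.integral_nonneg hT.le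
    intro x _
    positivity
  have h3 := aux_nonneg_zero (w := fun x => (max (-u x) 0)^3) hT (hnc.pow 3) (fun x _ => by positivity) (by linarith)
  intro x hx
  have := h3 x hx
  have := pow_eq_zero_iff (three_ne_zero) |>.1 this
  have := le_max_left (-u x) 0
  linarith

lemma aux_local {T : ℝ} (hT : 0 < T) {a : ℝ → ℝ} (ha : IntervalIntegrable a volume 0 T)
    {σ τ : ℝ} (hσ : 0 ≤ σ) (hst : σ ≤ τ) (hτ : τ ≤ T)
    (hpos : ∀ᵐ x ∂(volume.restrict (Icc σ τ)), 0 ≤ a x)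
    {δ : ℝ} (hδ : 0 < δ) (hδ2 : σ + δ ≤ τ - δ) 
    {M : ℝ} (hM0 : 0 < M) (hM : 2 * (τ - σ) < M * δ^2 * ∫ x in (σ+δ)..(τ-δ), a x)
    {h u p : ℝ → ℝ} (hc : Continuous h) (hnn : ∀ s, 0 ≤ h s) {R : ℝ}
    (hR : 0 < R) (hMR : ∀ s, R ≤ s → M * s ≤ h s)
    (hs : IsSolOn T (fun t => a t * h (u t)) u p) (hu0 : ∀ x ∈ Icc 0 T, 0 ≤ u x) :
    ∀ x ∈ Icc σ τ, u x ≤ (τ - σ) / δ * R := by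
  have huc := aux_cont hs
  have hI : Icc σ τ ⊆ Icc 0 T := Icc_subset_Icc hσ hτ
  have hfi := aux_int_a hT ha (hc.comp_continuousOn huc)
  have hsub : ∀ x ∈ Icc σ τ, ∀ y ∈ Icc σ τ, IntervalIntegrable a volume x y := fun x hx y hy =>
    ha.mono_set (by
      rw [uIcc_of_le hT.le]; exact ordConnected_Icc.uIcc_subset (hI hx) (hI hy))
  have hsubf : ∀ x ∈ Icc 0 T, ∀ y ∈ Icc 0 T, IntervalIntegrable (fun t => a t * h (u t)) volume x y := 
    fun x hx y hy => hfi.mono_set (by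
      rw [uIcc_of_le hT.le]; exact ordConnected_Icc.uIcc_subset (hx) (hy))
  have hpd : ∀ x ∈ Icc σ τ, ∀ y ∈ Icc σ τ, p x - p y = ∫ t in x..y, a t * h (u t) := by
    intro x hx y hy
    have h1 := hs.2.2 x (hI hx)
    have h2 := hs.2.2 y (hI hy)
    have h0m : (0:ℝ) ∈ Icc 0 T := ⟨le_rfl, hT.le⟩
    have := intervalIntegral.integral_add_adjacent_intervals (hsubf 0 h0m x (hI hx)) (hsubf x (hI hx) y (hI hy))
    linarith
  have hanti : ∀ x ∈ Icc σ τ, ∀ y ∈ Icc σ τ, x ≤ y → p y ≤ p x := by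
    intro x hx y hy hxy
    have h1 := hpd x hx y hy
    have : 0 ≤ ∫ t in x..y, a t * h (u t) := by
      apply intervalIntegral.integral_nonneg_of_ae_restrict hxy
      filter_upwards [ae_restrict_of_ae_restrict_of_subset (Icc_subset_Icc hx.1 hy.2) hpos] with t ht
      exact mul_nonneg ht (hnn _)
    linarith
  have hslope : ∀ x ∈ Icc σ τ, ∀ y ∈ Icc σ τ, x ≤ y →
      p y * (y - x) ≤ u y - u x ∧ u y - u x ≤ p x * (y - x) := by
    intro x hx y hy hxy
    have hxyI : Icc x y ⊆ Icc σ τ := Icc_subset_Icc hx.1 hy.2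
    rw [← aux_ftc hs.1 hs.2.1 (hI hx) (hI hy)]
    have hpi : IntervalIntegrable p volume x y := by
      apply ContinuousOn.intervalIntegrable
      rw [uIcc_of_le hxy]; exact hs.2.1.mono (hxyI.trans hI)
    constructor
    · have := intervalIntegral.integral_mono_on hxy (f := fun _ => p y) (by simp) hpi
        (fun t ht => hanti t (hxyI ht) y hy ht.2)
      simp at this; linarith
    · have := intervalIntegral.integral_mono_on hxy (g := fun _ => p x) hpi (by simp) 
        (fun t ht => hanti x hx t (hxyI ht) ht.1)
      simp at this; linarith
  obtain ⟨x0, hx0, hmax⟩ := isCompact_Icc.exists_isMaxOn (nonempty_Icc.2 hst) (huc.mono hI)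
  have hmax' : ∀ x ∈ Icc σ τ, u x ≤ u x0 := fun x hx => hmax hx
  intro x hx
  refine (hmax' x hx).trans ?_
  by_contra! hcon
  have hσm : σ ∈ Icc σ τ := ⟨le_rfl, hst⟩
  have hτm : τ ∈ Icc σ τ := ⟨hst, le_rfl⟩
  have h1m : σ + δ ∈ Icc σ τ := ⟨by linarith, by linarith⟩
  have h2m : τ - δ ∈ Icc σ τ := ⟨by linarith, by linarith⟩
  set m := u x0
  have hm : 0 < m := lt_of_le_of_lt (mul_nonneg (div_nonneg (by linarith) hδ.le) hR.le) hcon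
  have hmR : R * (τ - σ) < m * δ := by
    rw [div_mul_eq_mul_div, div_lt_iff₀ hδ] at hcon; linarith
  have hlow : ∀ x ∈ Icc (σ+δ) (τ-δ), δ * m ≤ (τ - σ) * u x := by
    intro x hx
    have hxI : x ∈ Icc σ τ := ⟨by linarith [hx.1], by linarith [hx.2]⟩
    have hux := hu0 x (hI hxI)
    rcases le_total x x0 with hle | hle
    · have a1 := (hslope σ hσm x hxI hxI.1).1
      have a2 := (hslope x hxI x0 hx0 hle).2
      have a3 := hu0 σ (hI hσm)
      have : (x - σ) * m ≤ (x0 - σ) * u x := by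
        nlinarith [mul_le_mul_of_nonneg_left a2 (sub_nonneg.2 hxI.1),
          mul_le_mul_of_nonneg_left a1 (sub_nonneg.2 hle), mul_nonneg (sub_nonneg.2 hle) a3]
      nlinarith [mul_le_mul_of_nonneg_right (by linarith [hx0.2] : x0 - σ ≤ τ - σ) hux,
        mul_le_mul_of_nonneg_right (by linarith [hx.1] : δ ≤ x - σ) hm.le]
    · have a1 := (hslope x hxI τ hτm hxI.2).2
      have a2 := (hslope x0 hx0 x hxI hle).1
      have a3 := hu0 τ (hI hτm)
      have : (τ - x) * m ≤ (τ - x0) * u x := by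
        nlinarith [mul_le_mul_of_nonneg_left a2 (sub_nonneg.2 hxI.2),
          mul_le_mul_of_nonneg_left a1 (sub_nonneg.2 hle), mul_nonneg (sub_nonneg.2 hle) a3]
      nlinarith [mul_le_mul_of_nonneg_right (by linarith [hx0.1] : τ - x0 ≤ τ - σ) hux,
        mul_le_mul_of_nonneg_right (by linarith [hx.2] : δ ≤ τ - x) hm.le]
  have hl : 0 < τ - σ := by linarith
  have hJI : Icc (σ+δ) (τ-δ) ⊆ Icc σ τ := Icc_subset_Icc h1m.1 h2m.2
  have hbig : ∀ x ∈ Icc (σ+δ) (τ-δ), M * (δ * m / (τ - σ)) ≤ h (u x) := by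
    intro x hx
    have h1 := hlow x hx
    have h2 : δ * m / (τ - σ) ≤ u x := by rw [div_le_iff₀ hl]; linarith
    have h3 : R ≤ u x := by
      refine le_trans ?_ h2
      rw [le_div_iff₀ hl]; linarith
    exact (mul_le_mul_of_nonneg_left h2 hM0.le).trans (hMR _ h3)
  have hint : (∫ t in (σ+δ)..(τ-δ), a t) * (M * (δ * m / (τ - σ))) ≤ p (σ+δ) - p (τ-δ) := by
    rw [hpd _ h1m _ h2m, ← intervalIntegral.integral_mul_const]
    apply intervalIntegral.integral_mono_ae_restrict hδ2 ((hsub _ h1m _ h2m).mul_const _) (hsubf _ (hI h1m) _ (hI h2m))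
    filter_upwards [ae_restrict_of_ae_restrict_of_subset hJI hpos, ae_restrict_mem measurableSet_Icc] with t ht htm
    exact mul_le_mul_of_nonneg_left (hbig t htm) ht
  have hp1 := (hslope σ hσm (σ+δ) h1m (by linarith)).1
  have hp2 := (hslope (τ-δ) h2m τ hτm (by linarith)).2
  have hb1 := hmax' _ h1m
  have hb2 := hmax' _ h2m
  have hc1 := hu0 σ (hI hσm)
  have hc2 := hu0 τ (hI hτm)
  have hsum : (p (σ+δ) - p (τ-δ)) * δ ≤ 2 * m := by nlinarith
  set A := ∫ t in (σ+δ)..(τ-δ), a t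
  have e : A * (M * (δ * m / (τ - σ))) * δ = (M * δ^2 * A) * m / (τ - σ) := by ring
  have : (M * δ^2 * A) * m / (τ - σ) ≤ 2 * m := by
    rw [← e]; exact (mul_le_mul_of_nonneg_right hint hδ.le).trans hsum
  rw [div_le_iff₀ hl] at this
  nlinarith

lemma aux_delta {T : ℝ} (hT : 0 < T) {a : ℝ → ℝ} (ha : IntervalIntegrable a volume 0 T)
    {σ τ : ℝ} (hσ : 0 ≤ σ) (hst : σ ≤ τ) (hτ : τ ≤ T)
    (hpos : ∀ᵐ x ∂(volume.restrict (Icc σ τ)), 0 ≤ a x)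
    (hne : ¬ (∀ᵐ x ∂(volume.restrict (Icc σ τ)), a x = 0)) :
    ∃ δ > 0, σ + δ ≤ τ - δ ∧ 0 < ∫ x in (σ+δ)..(τ-δ), a x := by
  have hA := aux_exists_pos ha hσ hst hτ hpos hne
  have hlt : σ < τ := by
    rcases hst.lt_or_eq with h | h
    · exact h
    · subst h; simp at hA
  have hi : IntervalIntegrable a volume σ τ := ha.mono_set (by
    rw [uIcc_of_le hst, uIcc_of_le hT.le]; exact Icc_subset_Icc hσ hτ)
  have hF : ContinuousOn (fun x => ∫ t in σ..x, a t) (Icc σ τ) := by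
    have := intervalIntegral.continuousOn_primitive_interval' hi (left_mem_uIcc (a := σ) (b := τ))
    rwa [uIcc_of_le hst] at this
  set F := fun x => ∫ t in σ..x, a t with hFd
  set η := (τ - σ)/2 with hη
  have hηp : 0 < η := by rw [hη]; linarith
  have hG : ContinuousOn (fun δ => F (τ - δ) - F (σ + δ)) (Icc 0 η) := by
    apply ContinuousOn.sub
    · apply hF.comp (by fun_prop)
      intro d hd
      constructor <;> linarith [hd.1, hd.2]
    · apply hF.comp (by fun_prop)
      intro d hd
      constructor <;> linarith [hd.1, hd.2]
  have h0 : 0 < F (τ - 0) - F (σ + 0) := by simp [hFd]; exact hA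
  have hev : ∀ᶠ d in nhdsWithin 0 (Icc 0 η), 0 < F (τ - d) - F (σ + d) :=
    (hG 0 ⟨le_rfl, hηp.le⟩).eventually (lt_mem_nhds h0)
  have hev2 : ∀ᶠ d in nhdsWithin 0 (Ioo 0 η), 0 < F (τ - d) - F (σ + d) :=
    hev.filter_mono (nhdsWithin_mono _ Ioo_subset_Icc_self)
  have : (nhdsWithin (0:ℝ) (Ioo 0 η)).NeBot := by
    rw [nhdsWithin_Ioo_eq_nhdsGT hηp]; infer_instance
  obtain ⟨d, hd, hdm⟩ := (hev2.and self_mem_nhdsWithin).exists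
  refine ⟨d, hdm.1, by linarith [hdm.2], ?_⟩
  have hm1 : σ + d ∈ Icc σ τ := ⟨by linarith [hdm.1], by linarith [hdm.2]⟩
  have hm2 : τ - d ∈ Icc σ τ := ⟨by linarith [hdm.2], by linarith [hdm.1]⟩
  have hs : ∀ y ∈ Icc σ τ, IntervalIntegrable a volume σ y := fun y hy =>
    hi.mono_set (by rw [uIcc_of_le hy.1, uIcc_of_le hst]; exact Icc_subset_Icc le_rfl hy.2)
  have := intervalIntegral.integral_add_adjacent_intervals (hs _ hm1) ((hs _ hm1).symm.trans (hs _ hm2))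
  simp only [hFd] at hd
  linarith

lemma aux_apriori {T : ℝ} (hT : 0 < T) {a : ℝ → ℝ} (ha : IntervalIntegrable a volume 0 T)
    (ha1 : CondA1 T a) : ∃ C M : ℝ, 1 ≤ C ∧ 0 < M ∧
    ∀ h : ℝ → ℝ, Continuous h → (∀ s, 0 ≤ h s) → ∀ R : ℝ, 0 < R → (∀ s, R ≤ s → M * s ≤ h s) →
    ∀ u p : ℝ → ℝ, IsSolOn T (fun t => a t * h (u t)) u p → (∀ x ∈ Icc 0 T, 0 ≤ u x) → BCond T u p →
    ∀ x ∈ Icc 0 T, u x ≤ C * R := by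
  obtain ⟨m, σ, τ, hm, hst, -, hpos, hnz, hneg⟩ := ha1
  choose δ hδ hδ2 hA using fun i => aux_delta hT ha (hst i).1 (hst i).2.1 (hst i).2.2 (hpos i) (hnz i)
  let Ci : Fin m → ℝ := fun i => (τ i - σ i) / δ i
  let Mi : Fin m → ℝ := fun i => 2 * (τ i - σ i) / ((δ i)^2 * ∫ x in (σ i + δ i)..(τ i - δ i), a x)
  have hCi : ∀ i, 0 ≤ Ci i := fun i => div_nonneg (by linarith [(hst i).2.1]) (hδ i).le
  have hMi : ∀ i, 0 ≤ Mi i := fun i =>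
    div_nonneg (by linarith [(hst i).2.1]) (mul_nonneg (sq_nonneg _) (hA i).le)
  have hCle : ∀ i, Ci i ≤ 1 + ∑ j, Ci j := fun i => by
    have := Finset.single_le_sum (f := Ci) (fun j _ => hCi j) (Finset.mem_univ i); linarith
  have hMle : ∀ i, Mi i < 1 + ∑ j, Mi j := fun i => by
    have := Finset.single_le_sum (f := Mi) (fun j _ => hMi j) (Finset.mem_univ i); linarith
  have hMp : 0 < 1 + ∑ j, Mi j := by
    have := Finset.sum_nonneg (s := Finset.univ) (f := Mi) (fun j _ => hMi j); linarith
  refine ⟨1 + ∑ j, Ci j, 1 + ∑ j, Mi j, ?_, hMp, ?_⟩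
  · have := Finset.sum_nonneg (s := Finset.univ) (f := Ci) (fun j _ => hCi j); linarith
  intro h hc hnn R hR hMR u p hs hu0 hB
  set P := (1 + ∑ j, Ci j) * R with hP
  have hloc : ∀ i, ∀ x ∈ Icc (σ i) (τ i), u x ≤ P := by
    intro i x hx
    refine (aux_local hT ha (hst i).1 (hst i).2.1 (hst i).2.2 (hpos i) (hδ i) (hδ2 i) hMp ?_ hc hnn hR hMR hs hu0 x hx).trans
      (mul_le_mul_of_nonneg_right (hCle i) hR.le)
    have := hMle i
    simp only [Mi] at this
    rw [div_lt_iff₀ (mul_pos (pow_pos (hδ i) 2) (hA i))] at this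
    rw [mul_assoc]; exact this
  have huc := aux_cont hs
  have hd : ∀ s : ℝ, HasDerivAt (fun s : ℝ => (max (s - P) 0)^2) (2 * max (s - P) 0) s := fun s => by
    have := (aux_deriv_sq (s - P)).comp s ((hasDerivAt_id s).sub_const P)
    simp only [mul_one] at this
    exact this
  have hmc : ContinuousOn (fun x => 2 * max (u x - P) 0) (Icc 0 T) := by
    have h1 : Continuous fun s : ℝ => 2 * max (s - P) 0 := by fun_prop
    exact h1.comp_continuousOn huc
  have hw := aux_weakB (ψ := fun s : ℝ => (max (s - P) 0)^2) (ψ' := fun s : ℝ => 2 * max (s - P) 0) hT hs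
    (aux_int_a hT ha (hc.comp_continuousOn huc)) hB (fun x _ => hd (u x)) hmc
  have hle : ∫ x in (0:ℝ)..T, a x * h (u x) * (max (u x - P) 0)^2 ≤ 0 := by
    have h1 : 0 ≤ ∫ x in (0:ℝ)..T, -(a x * h (u x) * (max (u x - P) 0)^2) := by
      apply intervalIntegral.integral_nonneg_of_ae_restrict hT.le
      have hms : MeasurableSet (Icc (0:ℝ) T \ ⋃ i, Icc (σ i) (τ i)) :=
        measurableSet_Icc.diff (MeasurableSet.iUnion fun i => measurableSet_Icc)
      rw [ae_restrict_iff' hms] at hneg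
      filter_upwards [ae_restrict_of_ae hneg, ae_restrict_mem measurableSet_Icc] with x hx hxm
      by_cases hxi : x ∈ ⋃ i, Icc (σ i) (τ i)
      · obtain ⟨i, hi⟩ := mem_iUnion.1 hxi
        have := hloc i x hi
        rw [max_eq_right (by linarith)]
        simp
      · have := hx ⟨hxm, hxi⟩
        have h2 := mul_nonneg (hnn (u x)) (sq_nonneg (max (u x - P) 0))
        simp only [Pi.zero_apply]
        nlinarith
    rw [intervalIntegral.integral_neg] at h1
    linarith
  rw [hw] at hle
  have hz := aux_nonneg_zero (w := fun x => 2 * max (u x - P) 0 * (p x)^2) hT (hmc.mul (hs.2.1.pow 2))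
    (fun x _ => by positivity) hle
  let i : Fin m := ⟨0, hm⟩
  have hσm : σ i ∈ Icc 0 T := ⟨(hst i).1, (hst i).2.1.trans (hst i).2.2⟩
  intro x hx
  have h1 := aux_ftc (u := fun x => (max (u x - P) 0)^2) (p := fun x => 2 * max (u x - P) 0 * p x)
    (fun x hx => (hd (u x)).comp_hasDerivWithinAt x (hs.1 x hx)) (hmc.mul hs.2.1) hσm hx
  have h2 : ∫ t in (σ i)..x, 2 * max (u t - P) 0 * p t = ∫ t in (σ i)..x, (0:ℝ) := by
    apply intervalIntegral.integral_congr
    intro t ht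
    have := hz t (ordConnected_Icc.uIcc_subset hσm hx ht)
    simp only at this ⊢
    rcases mul_eq_zero.1 this with h | h
    · rw [h, zero_mul]
    · rw [pow_eq_zero_iff two_ne_zero |>.1 h, mul_zero]
  rw [h2, max_eq_right (by linarith [hloc i (σ i) ⟨le_rfl, (hst i).2.1⟩] : u (σ i) - P ≤ 0)] at h1
  simp at h1
  have h3 := (pow_eq_zero_iff (two_ne_zero)).1 h1.symm
  have h4 := le_max_left (u x - P) 0
  linarith

lemma aux_unique {T : ℝ} (hT : 0 < T) {a h u p : ℝ → ℝ} (ha : IntervalIntegrable a volume 0 T)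
    {K : ℝ} (hK : 0 ≤ K) (hKh : ∀ s, 0 ≤ s → |h s| ≤ K * s) (hc : Continuous h)
    (hs : IsSolOn T (fun t => a t * h (u t)) u p) (hu0 : ∀ x ∈ Icc 0 T, 0 ≤ u x)
    {x0 : ℝ} (hx0 : x0 ∈ Icc 0 T) (hux : u x0 = 0) (hpx : p x0 = 0) :
    ∀ x ∈ Icc 0 T, u x = 0 := by
  have huc := aux_cont hs
  have hfi := aux_int_a hT ha (hc.comp_continuousOn huc)
  have h0m : (0:ℝ) ∈ Icc 0 T := ⟨le_rfl, hT.le⟩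
  have hN : 0 ≤ ∫ t in (0:ℝ)..T, |a t| := intervalIntegral.integral_nonneg hT.le fun _ _ => abs_nonneg _
  set N := ∫ t in (0:ℝ)..T, |a t| with hNd
  obtain ⟨η, hη, hηN⟩ : ∃ η > 0, η * (K * N) < 1 := by
    refine ⟨1 / (K * N + 1), by positivity, ?_⟩
    rw [one_div, inv_mul_eq_div, div_lt_one (by positivity)]; linarith
  have step : ∀ y ∈ Icc 0 T, u y = 0 → p y = 0 → ∀ x ∈ Icc 0 T, |x - y| ≤ η → u x = 0 ∧ p x = 0 := by
    intro y hy huy hpy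
    set S := Icc (max 0 (y - η)) (min T (y + η)) with hS
    have hSI : S ⊆ Icc 0 T := Icc_subset_Icc (le_max_left _ _) (min_le_left _ _)
    have hyS : y ∈ S := ⟨max_le hy.1 (by linarith), le_min hy.2 (by linarith)⟩
    obtain ⟨z, hz, hmax⟩ := isCompact_Icc.exists_isMaxOn ⟨y, hyS⟩ (huc.mono hSI)
    have hmax' : ∀ x ∈ S, u x ≤ u z := fun x hx => hmax hx
    have hp : ∀ x ∈ S, |p x| ≤ K * N * u z := by
      intro x hx
      have h1 := hs.2.2 x (hSI hx)
      have h2 := hs.2.2 y hy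
      have hsubf : ∀ x ∈ Icc 0 T, ∀ y ∈ Icc 0 T, IntervalIntegrable (fun t => a t * h (u t)) volume x y := 
        fun x hx y hy => hfi.mono_set (by
          rw [uIcc_of_le hT.le]; exact ordConnected_Icc.uIcc_subset (hx) (hy))
      have h3 := intervalIntegral.integral_add_adjacent_intervals (hsubf 0 h0m y hy) (hsubf y hy x (hSI hx))
      have h4 : p x = - ∫ t in y..x, a t * h (u t) := by linarith
      rw [h4, abs_neg]
      have hsub : uIoc y x ⊆ Ioc 0 T := by
        intro t ht
        rw [mem_uIoc] at ht
        rcases ht with ht | ht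
        · exact ⟨hy.1.trans_lt ht.1, ht.2.trans (hSI hx).2⟩
        · exact ⟨(hSI hx).1.trans_lt ht.1, ht.2.trans hy.2⟩
      have hai : IntegrableOn (fun t => K * u z * |a t|) (Ioc 0 T) volume :=
        ((intervalIntegrable_iff_integrableOn_Ioc_of_le hT.le).1 ha).abs.const_mul _
      calc |∫ t in y..x, a t * h (u t)| ≤ ∫ t in uIoc y x, ‖a t * h (u t)‖ := by
            rw [← Real.norm_eq_abs]; exact intervalIntegral.norm_integral_le_integral_norm_uIoc
        _ ≤ ∫ t in uIoc y x, K * u z * |a t| := by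
            apply setIntegral_mono_on
            · exact ((hsubf y hy x (hSI hx)).def').norm
            · exact hai.mono_set hsub
            · exact measurableSet_uIoc
            · intro t ht
              have htS : t ∈ S := ordConnected_Icc.uIcc_subset hyS hx (uIoc_subset_uIcc ht)
              rw [norm_mul, Real.norm_eq_abs, Real.norm_eq_abs]
              have := hKh _ (hu0 t (hSI htS))
              have h5 := mul_le_mul_of_nonneg_left (hmax' t htS) hK
              nlinarith [abs_nonneg (a t), mul_le_mul_of_nonneg_left (this.trans h5) (abs_nonneg (a t))]
        _ ≤ ∫ t in Ioc 0 T, K * u z * |a t| := by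
            apply setIntegral_mono_set hai
            · exact Eventually.of_forall fun t => by
                have := hu0 z (hSI hz)
                simp only [Pi.zero_apply]
                positivity
            · exact hsub.eventuallyLE
        _ = K * N * u z := by
            rw [integral_const_mul, ← intervalIntegral.integral_of_le hT.le]; ring
    have huz : u z = 0 := by
      have h1 := aux_ftc hs.1 hs.2.1 hy (hSI hz)
      have h2 : ‖∫ t in y..z, p t‖ ≤ K * N * u z * |z - y| := by
        apply intervalIntegral.norm_integral_le_of_norm_le_const
        intro t ht
        exact hp t (ordConnected_Icc.uIcc_subset hyS hz (uIoc_subset_uIcc ht))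
      have h3 : |z - y| ≤ η := by
        rw [abs_le]
        have a1 := (le_max_right _ _).trans hz.1
        have a2 := hz.2.trans (min_le_right _ _)
        constructor <;> linarith
      rw [h1, huy, sub_zero, Real.norm_eq_abs] at h2
      have h4 := hu0 z (hSI hz)
      rw [abs_of_nonneg h4] at h2
      by_contra hne
      have h5 : 0 < u z := lt_of_le_of_ne h4 (Ne.symm hne)
      have h6 : K * N * u z * |z - y| ≤ K * N * u z * η := mul_le_mul_of_nonneg_left h3 (by positivity)
      nlinarith
    intro x hx hxy
    rw [abs_le] at hxy
    have hxS : x ∈ S := ⟨max_le hx.1 (by linarith), le_min hx.2 (by linarith)⟩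
    have h1 := hmax' x hxS
    have h2 := hp x hxS
    rw [huz] at h1 h2
    rw [mul_zero] at h2
    exact ⟨le_antisymm h1 (hu0 x hx), abs_eq_zero.1 (le_antisymm h2 (abs_nonneg _))⟩
  have ind : ∀ n : ℕ, ∀ x ∈ Icc 0 T, |x - x0| ≤ n * η → u x = 0 ∧ p x = 0 := by
    intro n
    induction n with
    | zero =>
      intro x hx h
      simp at h
      have : x = x0 := by linarith
      subst this
      exact ⟨hux, hpx⟩
    | succ n ih =>
      intro x hx h
      push_cast at h
      have hn : (0:ℝ) < n + 1 := by positivity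
      set y := x0 + n / (n + 1) * (x - x0) with hy
      have hfr : (n:ℝ) / (n+1) ≤ 1 := by rw [div_le_one hn]; linarith
      have hfr0 : 0 ≤ (n:ℝ) / (n+1) := by positivity
      have hym : y ∈ Icc 0 T := by
        constructor
        · have := mul_nonneg hfr0 hx.1
          have := mul_nonneg (sub_nonneg.2 hfr) hx0.1
          rw [hy]; linarith
        · have := mul_nonneg hfr0 (sub_nonneg.2 hx.2)
          have := mul_nonneg (sub_nonneg.2 hfr) (sub_nonneg.2 hx0.2)
          rw [hy]; linarith
      have e1 : |y - x0| = n / (n+1) * |x - x0| := by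
        rw [hy, add_sub_cancel_left, abs_mul, abs_of_nonneg hfr0]
      have e2 : |x - y| = 1 / (n+1) * |x - x0| := by
        have : x - y = 1 / (n+1) * (x - x0) := by rw [hy]; field_simp; ring
        rw [this, abs_mul, abs_of_nonneg (by positivity)]
      have h1 : |y - x0| ≤ n * η := by
        rw [e1, div_mul_eq_mul_div, div_le_iff₀ hn]
        have := mul_le_mul_of_nonneg_left h (Nat.cast_nonneg (α := ℝ) n)
        linarith
      have h2 : |x - y| ≤ η := by
        rw [e2, div_mul_eq_mul_div, div_le_iff₀ hn]; linarith
      obtain ⟨h3, h4⟩ := ih y hym h1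
      exact step y hym h3 h4 x hx h2
  intro x hx
  obtain ⟨n, hn⟩ := exists_nat_ge (|x - x0| / η)
  rw [div_le_iff₀ hη] at hn
  exact (ind n x hx hn).1

lemma aux_strict {T : ℝ} (hT : 0 < T) {a h u p : ℝ → ℝ} (ha : IntervalIntegrable a volume 0 T)
    {K : ℝ} (hK : 0 ≤ K) (hKh : ∀ s, 0 ≤ s → |h s| ≤ K * s) (hc : Continuous h)
    (hs : IsSolOn T (fun t => a t * h (u t)) u p) (hu0 : ∀ x ∈ Icc 0 T, 0 ≤ u x)
    (hB : BCond T u p) (hne : ∃ x ∈ Icc 0 T, u x ≠ 0) : ∀ x ∈ Icc 0 T, 0 < u x := by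
  by_contra! hcon
  obtain ⟨x, hx, hxu⟩ := hcon
  have hux : u x = 0 := le_antisymm hxu (hu0 x hx)
  obtain ⟨y, hy, hyu⟩ := hne
  apply hyu
  refine aux_unique hT ha hK hKh hc hs hu0 hx hux ?_ y hy
  have h0m : (0:ℝ) ∈ Icc 0 T := ⟨le_rfl, hT.le⟩
  have hTm : T ∈ Icc 0 T := ⟨hT.le, le_rfl⟩
  have end0 : u 0 = 0 → 0 ≤ p 0 := by
    intro h0
    have h1 : HasDerivWithinAt u (p 0) (Ioi 0) 0 :=
      ((hs.1 0 h0m).mono Ioc_subset_Icc_self).mono_of_mem_nhdsWithin (Ioc_mem_nhdsGT hT)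
    have h2 := hasDerivWithinAt_iff_tendsto_slope' (notMem_Ioi_self) |>.1 h1
    refine ge_of_tendsto h2 ?_
    filter_upwards [Ioc_mem_nhdsGT hT] with t ht
    rw [slope_def_field, h0]
    exact div_nonneg (by linarith [hu0 t (Ioc_subset_Icc_self ht)]) (by linarith [ht.1])
  have endT : u T = 0 → p T ≤ 0 := by
    intro h0
    have h1 : HasDerivWithinAt u (p T) (Iio T) T :=
      ((hs.1 T hTm).mono Ico_subset_Icc_self).mono_of_mem_nhdsWithin (Ico_mem_nhdsLT hT)
    have h2 := hasDerivWithinAt_iff_tendsto_slope' (notMem_Iio_self) |>.1 h1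
    refine le_of_tendsto h2 ?_
    filter_upwards [Ico_mem_nhdsLT hT] with t ht
    rw [slope_def_field, h0]
    exact div_nonpos_of_nonneg_of_nonpos (by linarith [hu0 t (Ico_subset_Icc_self ht)]) (by linarith [ht.2])
  rcases hx.1.eq_or_lt with h | h
  · subst h
    rcases hB.2 with h | h
    · exact h
    · have h1 := end0 hux
      have h2 := endT (by rw [← h, hux])
      rw [hB.1] at h2
      linarith
  rcases hx.2.eq_or_lt with h' | h'
  · subst h'
    rw [hB.1]
    rcases hB.2 with h | h
    · exact h
    · have h1 := endT hux
      have h2 := end0 (by rw [h, hux])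
      rw [hB.1] at h1
      linarith
  · have hm : IsLocalMin u x := by
      filter_upwards [Icc_mem_nhds h h'] with y hy
      rw [hux]; exact hu0 y hy
    exact hm.hasDerivAt_eq_zero ((hs.1 x hx).hasDerivAt (Icc_mem_nhds h h'))


lemma aux_mp {E : Type*} [NormedAddCommGroup E] [NormedSpace ℝ E] {J r D : E → ℝ} {Φ : E → E}
    (hJ : Continuous J) (hr : Continuous r) (hΦ : Continuous Φ) {κ α ρ : ℝ} (hκ : 0 < κ)
    (hD : ∀ z, 0 ≤ D z)
    (hseg : ∀ z, ∀ t ∈ Icc (0:ℝ) 1, J (z + t • (Φ z - z)) ≤ J z)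
    (hdec : ∀ z, J (Φ z) ≤ J z - κ * D z)
    (hsph : ∀ z, r z = ρ → α ≤ J z) {v : E} (h0 : r 0 < ρ) (hJ0 : J 0 < α)
    (hv : ρ < r v) (hJv : J v < α) :
    ∃ z : ℕ → E, (∀ n, α ≤ J (z n)) ∧ Tendsto (fun n => D (z n)) atTop (nhds 0) := by
  let O : ℕ → ℝ → E := fun n θ => Φ^[n] (θ • v)
  have hOc : ∀ n, Continuous (O n) := fun n => (hΦ.iterate n).comp (by fun_prop)
  have hOs : ∀ n θ, O (n+1) θ = Φ (O n θ) := fun n θ => by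
    simp only [O, Function.iterate_succ_apply']
  by_cases hex : ∃ θ, ∀ n, α ≤ J (O n θ)
  · obtain ⟨θ, hθ⟩ := hex
    refine ⟨fun n => O n θ, hθ, ?_⟩
    have hs : Summable (fun n => D (O n θ)) := by
      apply summable_of_sum_range_le (c := (J (O 0 θ) - α) / κ) (fun n => hD _)
      intro n
      have : ∀ n, κ * ∑ i ∈ Finset.range n, D (O i θ) ≤ J (O 0 θ) - J (O n θ) := by
        intro n
        induction n with
        | zero => simp
        | succ k ih =>
          rw [Finset.sum_range_succ, mul_add]
          have := hdec (O k θ)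
          rw [← hOs] at this
          linarith
      rw [le_div_iff₀ hκ]
      linarith [this n, hθ n]
    exact hs.tendsto_atTop_zero
  · exfalso
    push Not at hex
    have hne : ∀ z, J z < α → r z ≠ ρ := fun z hz h => absurd (hsph z h) (not_le.2 hz)
    have hstep1 : ∀ z, J z < α → r z < ρ → r (Φ z) < ρ := by
      intro z hz hrz
      by_contra hcon
      push Not at hcon
      have hc : ContinuousOn (fun t : ℝ => r (z + t • (Φ z - z))) (Icc 0 1) := by fun_prop
      have := intermediate_value_Icc zero_le_one hc
      obtain ⟨t, ht, htr⟩ := this (show ρ ∈ Icc _ _ from ⟨by simpa using hrz.le, by simpa using hcon⟩)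
      exact hne _ ((hseg z t ht).trans_lt hz) htr
    have hstep2 : ∀ z, J z < α → ρ < r z → ρ < r (Φ z) := by
      intro z hz hrz
      by_contra hcon
      push Not at hcon
      have hc : ContinuousOn (fun t : ℝ => r (z + t • (Φ z - z))) (Icc 0 1) := by fun_prop
      have := intermediate_value_Icc' zero_le_one hc
      obtain ⟨t, ht, htr⟩ := this (show ρ ∈ Icc _ _ from ⟨by simpa using hcon, by simpa using hrz.le⟩)
      exact hne _ ((hseg z t ht).trans_lt hz) htr
    have hJd : ∀ z, J (Φ z) ≤ J z := fun z => (hdec z).trans (by linarith [mul_nonneg hκ.le (hD z)])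
    have hJm : ∀ θ k n, J (O n θ) < α → J (O (n+k) θ) < α := by
      intro θ k
      induction k with
      | zero => intro n h; simpa using h
      | succ k ih => intro n h; rw [← add_assoc, hOs]; exact (hJd _).trans_lt (ih n h)
    have hA : ∀ θ k n, J (O n θ) < α → r (O n θ) < ρ → r (O (n+k) θ) < ρ := by
      intro θ k
      induction k with
      | zero => intro n h h2; simpa using h2
      | succ k ih => intro n h h2; rw [← add_assoc, hOs]; exact hstep1 _ (hJm θ k n h) (ih n h h2)
    have hB : ∀ θ k n, J (O n θ) < α → ρ < r (O n θ) → ρ < r (O (n+k) θ) := by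
      intro θ k
      induction k with
      | zero => intro n h h2; simpa using h2
      | succ k ih => intro n h h2; rw [← add_assoc, hOs]; exact hstep2 _ (hJm θ k n h) (ih n h h2)
    let U : Set ℝ := ⋃ n, {θ | J (O n θ) < α ∧ r (O n θ) < ρ}
    let W : Set ℝ := ⋃ n, {θ | J (O n θ) < α ∧ ρ < r (O n θ)}
    have hU : IsOpen U := isOpen_iUnion fun n =>
      (isOpen_lt (hJ.comp (hOc n)) continuous_const).inter (isOpen_lt (hr.comp (hOc n)) continuous_const)
    have hW : IsOpen W := isOpen_iUnion fun n =>
      (isOpen_lt (hJ.comp (hOc n)) continuous_const).inter (isOpen_lt continuous_const (hr.comp (hOc n)))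
    obtain ⟨θ, -, h1, h2⟩ := isPreconnected_univ (α := ℝ) U W hU hW (fun θ _ => by
      obtain ⟨n, hn⟩ := hex θ
      rcases lt_or_gt_of_ne (hne _ hn) with h | h
      · exact Or.inl (mem_iUnion.2 ⟨n, hn, h⟩)
      · exact Or.inr (mem_iUnion.2 ⟨n, hn, h⟩))
      ⟨0, trivial, mem_iUnion.2 ⟨0, by simpa [O] using hJ0, by simpa [O] using h0⟩⟩
      ⟨1, trivial, mem_iUnion.2 ⟨0, by simpa [O] using hJv, by simpa [O] using hv⟩⟩
    obtain ⟨n, hn1, hn2⟩ := mem_iUnion.1 h1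
    obtain ⟨k, hk1, hk2⟩ := mem_iUnion.1 h2
    have e1 := hA θ k n hn1 hn2
    have e2 := hB θ n k hk1 hk2
    rw [add_comm k n] at e2
    linarith


lemma aux_cs {T : ℝ} (hT : 0 < T) {q : ℝ → ℝ} (hq : Continuous q) {x : ℝ} (hx : x ∈ Icc 0 T) :
    (∫ t in (0:ℝ)..x, q t)^2 ≤ T * ∫ t in (0:ℝ)..T, (q t)^2 := by
  set s := ∫ t in (0:ℝ)..x, q t with hs
  have h1 : 0 ≤ ∫ t in (0:ℝ)..x, (q t - s / T)^2 :=
    intervalIntegral.integral_nonneg hx.1 fun _ _ => sq_nonneg _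
  have e1 : ∫ t in (0:ℝ)..x, (q t - s / T)^2 = (∫ t in (0:ℝ)..x, (q t)^2) - 2 * (s/T) * s + x * (s/T)^2 := by
    have : ∀ t, (q t - s / T)^2 = ((q t)^2 - 2 * (s/T) * q t) + (s/T)^2 := fun t => by ring
    simp only [this]
    rw [intervalIntegral.integral_add, intervalIntegral.integral_sub, intervalIntegral.integral_const_mul]
    · simp [← hs]
    all_goals apply Continuous.intervalIntegrable; fun_prop
  have h2 : ∫ t in (0:ℝ)..x, (q t)^2 ≤ ∫ t in (0:ℝ)..T, (q t)^2 := by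
    apply intervalIntegral.integral_mono_interval le_rfl hx.1 hx.2
    · exact Eventually.of_forall fun t => sq_nonneg _
    · apply Continuous.intervalIntegrable; fun_prop
  rw [e1] at h1
  have h3 : x * (s/T)^2 ≤ T * (s/T)^2 := mul_le_mul_of_nonneg_right hx.2 (sq_nonneg _)
  have h4 : T * (s/T)^2 = s^2/T := by field_simp
  have h5 : 2 * (s/T) * s = 2 * (s^2/T) := by ring
  have h6 : s^2 / T ≤ ∫ t in (0:ℝ)..T, (q t)^2 := by linarith
  rw [div_le_iff₀ hT] at h6
  linarith

/-- extension of a continuous function on `[0,T]` -/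
noncomputable def xt {T : ℝ} (hT : 0 < T) (w : C(Icc (0:ℝ) T, ℝ)) : ℝ → ℝ := IccExtend hT.le w

lemma xt_cont {T : ℝ} (hT : 0 < T) (w : C(Icc (0:ℝ) T, ℝ)) : Continuous (xt hT w) :=
  w.continuous.Icc_extend'

lemma xt_of_mem {T : ℝ} (hT : 0 < T) (w : C(Icc (0:ℝ) T, ℝ)) {x : ℝ} (hx : x ∈ Icc 0 T) :
    xt hT w x = w ⟨x, hx⟩ := IccExtend_of_mem hT.le w hx

lemma xt_le {T : ℝ} (hT : 0 < T) (w : C(Icc (0:ℝ) T, ℝ)) (x : ℝ) : |xt hT w x| ≤ ‖w‖ :=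
  w.norm_coe_le_norm _

lemma xt_int {T : ℝ} (hT : 0 < T) {b : ℝ → ℝ} (hb : IntervalIntegrable b volume 0 T)
    (w : C(Icc (0:ℝ) T, ℝ)) : IntervalIntegrable (fun t => b t * xt hT w t) volume 0 T :=
  hb.mul_continuousOn (xt_cont hT w).continuousOn

lemma xt_sub {T : ℝ} {f : ℝ → ℝ} (hf : IntervalIntegrable f volume 0 T) {x : ℝ} (hx : x ∈ Icc 0 T) :
    IntervalIntegrable f volume 0 x := hf.mono_set (by
      rw [uIcc_of_le hx.1, uIcc_of_le (hx.1.trans hx.2)]; exact Icc_subset_Icc le_rfl hx.2)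

lemma AI_cont {T : ℝ} (hT : 0 < T) {b : ℝ → ℝ} (hb : IntervalIntegrable b volume 0 T)
    (w : C(Icc (0:ℝ) T, ℝ)) : Continuous fun x : Icc (0:ℝ) T => ∫ t in (0:ℝ)..x, b t * xt hT w t := by
  have := intervalIntegral.continuousOn_primitive_interval' (xt_int hT hb w) left_mem_uIcc
  rw [uIcc_of_le hT.le] at this
  exact this.comp_continuous continuous_subtype_val (fun x => x.2)

/-- integration operator -/
noncomputable def AI {T : ℝ} (hT : 0 < T) {b : ℝ → ℝ} (hb : IntervalIntegrable b volume 0 T) :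
    C(Icc (0:ℝ) T, ℝ) →L[ℝ] C(Icc (0:ℝ) T, ℝ) :=
  LinearMap.mkContinuous
    { toFun := fun w => ⟨fun x => ∫ t in (0:ℝ)..x, b t * xt hT w t, AI_cont hT hb w⟩
      map_add' := fun w1 w2 => by
        ext x
        simp only [ContinuousMap.coe_mk, ContinuousMap.add_apply]
        rw [← intervalIntegral.integral_add (xt_sub (xt_int hT hb w1) x.2) (xt_sub (xt_int hT hb w2) x.2)]
        apply intervalIntegral.integral_congr
        intro t _
        show b t * (xt hT w1 t + xt hT w2 t) = _
        ring
      map_smul' := fun c w => by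
        ext x
        simp only [ContinuousMap.coe_mk, RingHom.id_apply, ContinuousMap.smul_apply, smul_eq_mul]
        rw [← intervalIntegral.integral_const_mul]
        apply intervalIntegral.integral_congr
        intro t _
        show b t * (c * xt hT w t) = _
        ring } (∫ t in (0:ℝ)..T, |b t|) (fun w => by
    have hN : 0 ≤ ∫ t in (0:ℝ)..T, |b t| := intervalIntegral.integral_nonneg hT.le fun _ _ => abs_nonneg _
    rw [ContinuousMap.norm_le _ (by positivity)]
    intro x
    simp only [LinearMap.coe_mk, AddHom.coe_mk, ContinuousMap.coe_mk]
    refine (intervalIntegral.norm_integral_le_integral_norm x.2.1).trans ?_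
    calc ∫ t in (0:ℝ)..x, ‖b t * xt hT w t‖ ≤ ∫ t in (0:ℝ)..T, ‖b t * xt hT w t‖ := by
          apply intervalIntegral.integral_mono_interval le_rfl x.2.1 x.2.2
          · exact Eventually.of_forall fun t => norm_nonneg _
          · exact (xt_int hT hb w).norm
      _ ≤ ∫ t in (0:ℝ)..T, |b t| * ‖w‖ := by
          apply intervalIntegral.integral_mono_on hT.le (xt_int hT hb w).norm (hb.abs.mul_const _)
          intro t _
          rw [norm_mul]
          exact mul_le_mul_of_nonneg_left (xt_le hT w t) (abs_nonneg _)
      _ = _ := intervalIntegral.integral_mul_const _ _)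

lemma AI_apply {T : ℝ} (hT : 0 < T) {b : ℝ → ℝ} (hb : IntervalIntegrable b volume 0 T)
    (w : C(Icc (0:ℝ) T, ℝ)) (x : Icc (0:ℝ) T) :
    AI hT hb w x = ∫ t in (0:ℝ)..x, b t * xt hT w t := rfl

lemma one_ii (T : ℝ) : IntervalIntegrable (fun _ => (1:ℝ)) volume 0 T := intervalIntegrable_const

lemma AI1_apply {T : ℝ} (hT : 0 < T) (w : C(Icc (0:ℝ) T, ℝ)) (x : Icc (0:ℝ) T) :
    AI hT (one_ii T) w x = ∫ t in (0:ℝ)..x, xt hT w t := by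
  rw [AI_apply]; simp

/-- right end point -/
def rp {T : ℝ} (hT : 0 < T) : Icc (0:ℝ) T := ⟨T, hT.le, le_rfl⟩

/-- projection -/
noncomputable def PE {T : ℝ} (hT : 0 < T) (e : ℝ) : C(Icc (0:ℝ) T, ℝ) →L[ℝ] C(Icc (0:ℝ) T, ℝ) :=
  ContinuousLinearMap.id ℝ _ - (e / T) •
    (((ContinuousMap.evalCLM ℝ (rp hT)).comp (AI hT (one_ii T))).smulRight (1 : C(Icc (0:ℝ) T, ℝ)))

lemma PE_apply {T : ℝ} (hT : 0 < T) (e : ℝ) (p : C(Icc (0:ℝ) T, ℝ)) (x : ℝ) :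
    xt hT (PE hT e p) x = xt hT p x - e / T * ∫ t in (0:ℝ)..T, xt hT p t := by
  have : ∫ t in (0:ℝ)..T, xt hT p t = AI hT (one_ii T) p (rp hT) := by rw [AI1_apply]; rfl
  rw [this]
  simp [PE, xt, IccExtend]

lemma xt_ii {T : ℝ} (hT : 0 < T) (w : C(Icc (0:ℝ) T, ℝ)) (x y : ℝ) :
    IntervalIntegrable (xt hT w) volume x y := (xt_cont hT w).intervalIntegrable _ _

lemma PE_symm {T : ℝ} (hT : 0 < T) (e : ℝ) (p q : C(Icc (0:ℝ) T, ℝ)) :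
    ∫ t in (0:ℝ)..T, xt hT (PE hT e p) t * xt hT q t = ∫ t in (0:ℝ)..T, xt hT p t * xt hT (PE hT e q) t := by
  simp only [PE_apply, sub_mul, mul_sub]
  have hp := xt_cont hT p
  have hq := xt_cont hT q
  rw [intervalIntegral.integral_sub, intervalIntegral.integral_sub,
    intervalIntegral.integral_const_mul, intervalIntegral.integral_mul_const]
  · ring
  all_goals apply Continuous.intervalIntegrable; fun_prop

lemma PE_norm {T : ℝ} (hT : 0 < T) {e : ℝ} (he0 : 0 ≤ e) (he1 : e ≤ 1) (p : C(Icc (0:ℝ) T, ℝ)) :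
    ∫ t in (0:ℝ)..T, (xt hT (PE hT e p) t)^2 ≤ ∫ t in (0:ℝ)..T, (xt hT p t)^2 := by
  simp only [PE_apply]
  have hp := xt_cont hT p
  set m := ∫ t in (0:ℝ)..T, xt hT p t with hm
  have : ∀ t, (xt hT p t - e / T * m)^2 = ((xt hT p t)^2 - 2 * (e/T*m) * xt hT p t) + (e/T*m)^2 := fun t => by ring
  simp only [this]
  rw [intervalIntegral.integral_add, intervalIntegral.integral_sub, intervalIntegral.integral_const_mul]
  · simp only [← hm, intervalIntegral.integral_const, sub_zero, smul_eq_mul]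
    have : T * (e/T*m)^2 - 2 * (e/T*m)*m = -(e*(2-e)*m^2/T) := by field_simp; ring
    have h2 : 0 ≤ e*(2-e)*m^2/T := div_nonneg (mul_nonneg (mul_nonneg he0 (by linarith)) (sq_nonneg _)) hT.le
    linarith
  all_goals apply Continuous.intervalIntegrable; fun_prop


lemma aux_taylor {h H : ℝ → ℝ} (hc : Continuous h) (hH : ∀ s, HasDerivAt H (h s) s) {s d K : ℝ}
    (hK : ∀ t ∈ Icc (0:ℝ) 1, |h (s + t * d) - h s| ≤ K * (t * |d|)) :
    |H (s + d) - H s - h s * d| ≤ K / 2 * d^2 := by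
  have hder : ∀ t ∈ uIcc (0:ℝ) 1, HasDerivAt (fun t => H (s + t * d) - t * (h s * d)) (h (s + t*d) * d - h s * d) t := by
    intro t _
    have h1 : HasDerivAt (fun t : ℝ => s + t * d) d t := by
      simpa using ((hasDerivAt_id t).mul_const d).const_add s
    have h2 := (hH (s + t * d)).comp t h1
    have h3 : HasDerivAt (fun t : ℝ => t * (h s * d)) (h s * d) t := by
      simpa using (hasDerivAt_id t).mul_const (h s * d)
    exact h2.sub h3
  have hi := intervalIntegral.integral_eq_sub_of_hasDerivAt hder
    (Continuous.intervalIntegrable (by fun_prop) _ _)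
  have e : H (s + d) - H s - h s * d = ∫ t in (0:ℝ)..1, (h (s + t*d) * d - h s * d) := by
    rw [hi]; simp; ring
  rw [e, ← Real.norm_eq_abs]
  calc _ ≤ ∫ t in (0:ℝ)..1, (K * d^2) * t := by
        apply intervalIntegral.norm_integral_le_of_norm_le zero_le_one
        · refine Eventually.of_forall fun t ht => ?_
          have := hK t (Ioc_subset_Icc_self ht)
          rw [← sub_mul, norm_mul, Real.norm_eq_abs, Real.norm_eq_abs]
          calc _ ≤ (K * (t * |d|)) * |d| := mul_le_mul_of_nonneg_right this (abs_nonneg _)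
            _ = K * (|d|^2) * t := by ring
            _ = _ := by rw [sq_abs]
        · apply Continuous.intervalIntegrable; fun_prop
    _ = _ := by
      rw [intervalIntegral.integral_const_mul, integral_id]; ring

lemma aux_neg (s d : ℝ) : (max (-(s+d)) 0)^2/2 ≤ (max (-s) 0)^2/2 - max (-s) 0 * d + d^2/2 := by
  rcases max_cases (-s) 0 with h | h <;> rcases max_cases (-(s+d)) 0 with h' | h' <;>
    rw [h.1, h'.1] <;> nlinarith [h.2, h'.2, sq_nonneg (s+d), sq_nonneg d]

/-- negative part -/
def ngC : C(ℝ, ℝ) := ⟨fun s => max (-s) 0, by fun_prop⟩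

/-- the function u associated with z = (c,p) -/
noncomputable def UU {T : ℝ} (hT : 0 < T) (e : ℝ) : (ℝ × C(Icc (0:ℝ) T, ℝ)) →L[ℝ] C(Icc (0:ℝ) T, ℝ) :=
  (ContinuousLinearMap.fst ℝ ℝ _).smulRight (1 : C(Icc (0:ℝ) T, ℝ)) +
    ((AI hT (one_ii T)).comp (PE hT e)).comp (ContinuousLinearMap.snd ℝ ℝ _)

lemma UU_apply {T : ℝ} (hT : 0 < T) (e : ℝ) (z : ℝ × C(Icc (0:ℝ) T, ℝ)) {x : ℝ} (hx : x ∈ Icc 0 T) :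
    xt hT (UU hT e z) x = z.1 + ∫ t in (0:ℝ)..x, xt hT (PE hT e z.2) t := by
  rw [xt_of_mem hT _ hx]
  simp [UU, AI1_apply]

/-- primitive of the right-hand side -/
noncomputable def VV {T : ℝ} (hT : 0 < T) {a : ℝ → ℝ} (ha : IntervalIntegrable a volume 0 T)
    (h : C(ℝ, ℝ)) (u : C(Icc (0:ℝ) T, ℝ)) : C(Icc (0:ℝ) T, ℝ) :=
  AI hT ha (h.comp u) + AI hT (one_ii T) (ngC.comp u)

lemma VV_apply {T : ℝ} (hT : 0 < T) {a : ℝ → ℝ} (ha : IntervalIntegrable a volume 0 T)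
    (h : C(ℝ, ℝ)) (u : C(Icc (0:ℝ) T, ℝ)) {x : ℝ} (hx : x ∈ Icc 0 T) :
    xt hT (VV hT ha h u) x = ∫ t in (0:ℝ)..x, (a t * h (xt hT u t) + max (-(xt hT u t)) 0) := by
  rw [xt_of_mem hT _ hx, intervalIntegral.integral_add]
  · simp only [VV, ContinuousMap.add_apply, AI1_apply, AI_apply]
    rfl
  · exact xt_sub (xt_int hT ha (h.comp u)) hx
  · exact xt_ii hT (ngC.comp u) _ _

/-- gradient part -/
noncomputable def PP {T : ℝ} (hT : 0 < T) (e : ℝ) (V : C(Icc (0:ℝ) T, ℝ)) : C(Icc (0:ℝ) T, ℝ) :=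
  PE hT e (V (rp hT) • 1 - V)

/-- the functional -/
noncomputable def JJ {T : ℝ} (hT : 0 < T) {a : ℝ → ℝ} (ha : IntervalIntegrable a volume 0 T)
    (H : C(ℝ, ℝ)) (e : ℝ) (z : ℝ × C(Icc (0:ℝ) T, ℝ)) : ℝ :=
  (AI hT (one_ii T) (z.2 * z.2) (rp hT)) / 2 - AI hT ha (H.comp (UU hT e z)) (rp hT)
    + (AI hT (one_ii T) ((ngC.comp (UU hT e z)) * (ngC.comp (UU hT e z))) (rp hT)) / 2

lemma JJ_apply {T : ℝ} (hT : 0 < T) {a : ℝ → ℝ} (ha : IntervalIntegrable a volume 0 T)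
    (H : C(ℝ, ℝ)) (e : ℝ) (z : ℝ × C(Icc (0:ℝ) T, ℝ)) :
    JJ hT ha H e z = (∫ t in (0:ℝ)..T, (xt hT z.2 t)^2) / 2 - (∫ t in (0:ℝ)..T, a t * H (xt hT (UU hT e z) t))
      + (∫ t in (0:ℝ)..T, (max (-(xt hT (UU hT e z) t)) 0)^2)/2 := by
  rw [JJ, AI1_apply, AI1_apply, AI_apply]
  simp only [sq]
  rfl

lemma UU_cont {T : ℝ} (hT : 0 < T) (e : ℝ) : Continuous (UU hT e) := (UU hT e).continuous

lemma VV_cont {T : ℝ} (hT : 0 < T) {a : ℝ → ℝ} (ha : IntervalIntegrable a volume 0 T)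
    (h : C(ℝ, ℝ)) : Continuous (VV hT ha h) :=
  ((AI hT ha).continuous.comp (ContinuousMap.continuous_postcomp h)).add
    ((AI hT (one_ii T)).continuous.comp (ContinuousMap.continuous_postcomp ngC))

lemma PP_cont {T : ℝ} (hT : 0 < T) (e : ℝ) : Continuous (PP hT e) := by
  have : Continuous fun V : C(Icc (0:ℝ) T, ℝ) => V (rp hT) := (ContinuousMap.evalCLM ℝ (rp hT)).continuous
  exact (PE hT e).continuous.comp ((this.smul continuous_const).sub continuous_id)

lemma JJ_cont {T : ℝ} (hT : 0 < T) {a : ℝ → ℝ} (ha : IntervalIntegrable a volume 0 T)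
    (H : C(ℝ, ℝ)) (e : ℝ) : Continuous (JJ hT ha H e) := by
  have hev : Continuous fun V : C(Icc (0:ℝ) T, ℝ) => V (rp hT) := (ContinuousMap.evalCLM ℝ (rp hT)).continuous
  have hn := (ContinuousMap.continuous_postcomp (X := Icc (0:ℝ) T) ngC).comp (UU_cont hT e)
  have hH := (ContinuousMap.continuous_postcomp (X := Icc (0:ℝ) T) H).comp (UU_cont hT e)
  exact (((hev.comp ((AI hT (one_ii T)).continuous.comp (continuous_snd.mul continuous_snd))).div_const 2).sub
    (hev.comp ((AI hT ha).continuous.comp hH))).add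
    ((hev.comp ((AI hT (one_ii T)).continuous.comp (hn.mul hn))).div_const 2)

/-- size of the gradient -/
noncomputable def DD {T : ℝ} (hT : 0 < T) {a : ℝ → ℝ} (ha : IntervalIntegrable a volume 0 T)
    (h : C(ℝ, ℝ)) (e : ℝ) (z : ℝ × C(Icc (0:ℝ) T, ℝ)) : ℝ :=
  (VV hT ha h (UU hT e z) (rp hT))^2 +
    ∫ t in (0:ℝ)..T, (xt hT (PP hT e (VV hT ha h (UU hT e z)) - z.2) t)^2

lemma DD_nonneg {T : ℝ} (hT : 0 < T) {a : ℝ → ℝ} (ha : IntervalIntegrable a volume 0 T)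
    (h : C(ℝ, ℝ)) (e : ℝ) (z : ℝ × C(Icc (0:ℝ) T, ℝ)) : 0 ≤ DD hT ha h e z :=
  add_nonneg (sq_nonneg _) (intervalIntegral.integral_nonneg hT.le fun _ _ => sq_nonneg _)

/-- Osc bound -/
lemma UU_osc {T : ℝ} (hT : 0 < T) {e : ℝ} (he0 : 0 ≤ e) (he1 : e ≤ 1) (z : ℝ × C(Icc (0:ℝ) T, ℝ))
    {x : ℝ} (hx : x ∈ Icc 0 T) :
    (xt hT (UU hT e z) x - z.1)^2 ≤ T * ∫ t in (0:ℝ)..T, (xt hT z.2 t)^2 := by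
  rw [UU_apply hT e z hx, add_sub_cancel_left]
  exact (aux_cs hT (xt_cont hT _) hx).trans (mul_le_mul_of_nonneg_left (PE_norm hT he0 he1 _) hT.le)

/-- first-order identity -/
lemma JJ_first {T : ℝ} (hT : 0 < T) {a : ℝ → ℝ} (ha : IntervalIntegrable a volume 0 T)
    (h : C(ℝ, ℝ)) (e : ℝ) (u : C(Icc (0:ℝ) T, ℝ)) (ζ : ℝ × C(Icc (0:ℝ) T, ℝ)) :
    ∫ t in (0:ℝ)..T, (a t * h (xt hT u t) + max (-(xt hT u t)) 0) * xt hT (UU hT e ζ) t =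
      ζ.1 * VV hT ha h u (rp hT) + ∫ t in (0:ℝ)..T, xt hT ζ.2 t * xt hT (PP hT e (VV hT ha h u)) t := by
  have hf : IntervalIntegrable (fun t => a t * h (xt hT u t) + max (-(xt hT u t)) 0) volume 0 T :=
    (xt_int hT ha (h.comp u)).add (xt_ii hT (ngC.comp u) _ _)
  set f := (fun t => a t * h (xt hT u t) + max (-(xt hT u t)) 0) with hfd
  have hVT : VV hT ha h u (rp hT) = ∫ t in (0:ℝ)..T, f t := by
    rw [← VV_apply hT ha h u ⟨hT.le, le_rfl⟩, xt_of_mem hT _ ⟨hT.le, le_rfl⟩]; rfl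
  have e1 : ∫ t in (0:ℝ)..T, f t * xt hT (UU hT e ζ) t =
      ∫ t in (0:ℝ)..T, (f t * ζ.1 + f t * ∫ s in (0:ℝ)..t, xt hT (PE hT e ζ.2) s) := by
    apply intervalIntegral.integral_congr
    intro t ht
    rw [uIcc_of_le hT.le] at ht
    simp only
    rw [UU_apply hT e ζ ht]; ring
  have hp := xt_ii hT (PE hT e ζ.2) 0 T
  rw [e1, intervalIntegral.integral_add (hf.mul_const _), intervalIntegral.integral_mul_const, aux_ibp hf hp, hVT,
    PP, ← PE_symm, mul_comm ζ.1]
  · congr 1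
    have : ∀ t, xt hT (VV hT ha h u (rp hT) • 1 - VV hT ha h u) t = (∫ t in (0:ℝ)..T, f t) - xt hT (VV hT ha h u) t := by
      intro t
      rw [← hVT]
      simp [xt, IccExtend]
    simp only [this, mul_sub]
    rw [intervalIntegral.integral_sub, intervalIntegral.integral_mul_const, mul_comm]
    · congr 1
      apply intervalIntegral.integral_congr
      intro t ht
      rw [uIcc_of_le hT.le] at ht
      simp only
      rw [VV_apply hT ha h u ht]
    · exact hp.mul_const _
    · exact ((xt_cont hT _).mul (xt_cont hT _)).intervalIntegrable _ _
  · apply hf.mul_continuousOn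
    exact intervalIntegral.continuousOn_primitive_interval' hp left_mem_uIcc


lemma xt_add' {T : ℝ} (hT : 0 < T) (p q : C(Icc (0:ℝ) T, ℝ)) (s t : ℝ) :
    xt hT (p + s • q) t = xt hT p t + s * xt hT q t := by simp [xt, IccExtend]

lemma JJ_taylor {T : ℝ} (hT : 0 < T) {a : ℝ → ℝ} (ha : IntervalIntegrable a volume 0 T)
    {h H : C(ℝ, ℝ)} (hH : ∀ s, HasDerivAt H (h s) s) {K : ℝ} (hK0 : 0 ≤ K)
    (hK : ∀ s t, |h s - h t| ≤ K * |s - t|) {e : ℝ} (he0 : 0 ≤ e) (he1 : e ≤ 1)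
    (z ζ : ℝ × C(Icc (0:ℝ) T, ℝ)) (s : ℝ) :
    JJ hT ha H e (z + s • ζ) ≤ JJ hT ha H e z
      + s * ((∫ t in (0:ℝ)..T, xt hT ζ.2 t * xt hT (z.2 - PP hT e (VV hT ha h (UU hT e z))) t)
          - ζ.1 * VV hT ha h (UU hT e z) (rp hT))
      + s^2 / 2 * ((1 + (K * (∫ t in (0:ℝ)..T, |a t|) + T) * (2 + 2 * T)) *
          (ζ.1^2 + ∫ t in (0:ℝ)..T, (xt hT ζ.2 t)^2)) := by
  have hu := xt_cont hT (UU hT e z)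
  have hv := xt_cont hT (UU hT e ζ)
  have hp := xt_cont hT z.2
  have hq := xt_cont hT ζ.2
  have hfirst := JJ_first hT ha h e (UU hT e z) ζ
  set P := PP hT e (VV hT ha h (UU hT e z)) with hPd
  have hPc := xt_cont hT P
  rw [JJ_apply, JJ_apply, map_add, map_smul]
  simp only [Prod.snd_add, Prod.smul_snd, xt_add']
  set u := xt hT (UU hT e z)
  set v := xt hT (UU hT e ζ)
  set p := xt hT z.2
  set q := xt hT ζ.2
  set Y := ζ.1^2 + ∫ t in (0:ℝ)..T, (q t)^2 with hY
  have hvb : ∀ t ∈ Icc 0 T, (v t)^2 ≤ (2 + 2*T) * Y := by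
    intro t ht
    have h1 := UU_osc hT he0 he1 ζ ht
    have h2 : 0 ≤ ∫ t in (0:ℝ)..T, (q t)^2 := intervalIntegral.integral_nonneg hT.le fun _ _ => sq_nonneg _
    have h3 : (v t)^2 ≤ 2 * ζ.1^2 + 2 * (v t - ζ.1)^2 := by nlinarith [sq_nonneg (v t - ζ.1 - ζ.1)]
    rw [hY]
    change (v t - ζ.1)^2 ≤ T * ∫ t in (0:ℝ)..T, (q t)^2 at h1
    nlinarith [mul_nonneg hT.le (sq_nonneg ζ.1)]
  have hY0 : 0 ≤ Y := add_nonneg (sq_nonneg _) (intervalIntegral.integral_nonneg hT.le fun _ _ => sq_nonneg _)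
  -- p part
  have e1 : ∫ t in (0:ℝ)..T, (p t + s * q t)^2 =
      (∫ t in (0:ℝ)..T, (p t)^2) + 2 * s * (∫ t in (0:ℝ)..T, q t * p t) + s^2 * ∫ t in (0:ℝ)..T, (q t)^2 := by
    have : ∀ t, (p t + s * q t)^2 = (p t)^2 + 2 * s * (q t * p t) + s^2 * (q t)^2 := fun t => by ring
    simp only [this]
    rw [intervalIntegral.integral_add, intervalIntegral.integral_add, intervalIntegral.integral_const_mul,
      intervalIntegral.integral_const_mul]
    all_goals apply Continuous.intervalIntegrable; fun_prop
  have e2 : ∫ t in (0:ℝ)..T, q t * xt hT (z.2 - P) t =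
      (∫ t in (0:ℝ)..T, q t * p t) - ∫ t in (0:ℝ)..T, q t * xt hT P t := by
    have : ∀ t, q t * xt hT (z.2 - P) t = q t * p t - q t * xt hT P t := fun t => by
      have : xt hT (z.2 - P) t = p t - xt hT P t := rfl
      rw [this]; ring
    simp only [this]
    rw [intervalIntegral.integral_sub] <;> apply Continuous.intervalIntegrable <;> fun_prop
  -- nonlinear part
  have i1 : ∀ w : ℝ → ℝ, Continuous w → IntervalIntegrable (fun t => a t * w t) volume 0 T :=
    fun w hw => ha.mul_continuousOn hw.continuousOn
  have iH : IntervalIntegrable (fun t => a t * H (u t + s * v t)) volume 0 T := i1 _ (by fun_prop)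
  have iH0 : IntervalIntegrable (fun t => a t * H (u t)) volume 0 T := i1 _ (by fun_prop)
  have iN : IntervalIntegrable (fun t => (max (-(u t + s * v t)) 0)^2/2) volume 0 T :=
    Continuous.intervalIntegrable (by fun_prop) _ _
  have iN0 : IntervalIntegrable (fun t => (max (-(u t)) 0)^2/2) volume 0 T :=
    Continuous.intervalIntegrable (by fun_prop) _ _
  have iF : IntervalIntegrable (fun t => (a t * h (u t) + max (-(u t)) 0) * v t) volume 0 T :=
    ((i1 _ (by fun_prop)).add (Continuous.intervalIntegrable (by fun_prop) _ _)).mul_continuousOn hv.continuousOn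
  have hk : IntervalIntegrable (fun t => K * |a t| + 1) volume 0 T :=
    (ha.abs.const_mul K).add intervalIntegrable_const
  have key : ∫ t in (0:ℝ)..T, ((max (-(u t + s * v t)) 0)^2/2 - a t * H (u t + s * v t)) ≤
      ∫ t in (0:ℝ)..T, ((((max (-(u t)) 0)^2/2 - a t * H (u t)) - s * ((a t * h (u t) + max (-(u t)) 0) * v t))
        + (s^2/2 * ((2+2*T)*Y)) * (K * |a t| + 1)) := by
    apply intervalIntegral.integral_mono_on hT.le (iN.sub iH) (((iN0.sub iH0).sub (iF.const_mul s)).add (hk.const_mul _))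
    intro t ht
    have h1 := aux_neg (u t) (s * v t)
    have h2 := aux_taylor (s := u t) (d := s * v t) (K := K) h.continuous hH (fun r hr => by
      have := hK (u t + r * (s * v t)) (u t)
      rwa [add_sub_cancel_left, abs_mul r, abs_of_nonneg hr.1] at this)
    have h3 := mul_le_mul_of_nonneg_left h2 (abs_nonneg (a t))
    rw [← abs_mul] at h3
    have h4 := neg_le_of_abs_le h3
    have h5 : |a t| * (K / 2 * (s * v t)^2) + (s * v t)^2/2 ≤ (s^2/2 * ((2+2*T)*Y)) * (K * |a t| + 1) := by
      have : |a t| * (K / 2 * (s * v t)^2) + (s * v t)^2/2 = (s^2/2 * (K * |a t| + 1)) * (v t)^2 := by ring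
      rw [this]
      have h6 : 0 ≤ s^2/2 * (K * |a t| + 1) := by positivity
      calc _ ≤ (s^2/2 * (K * |a t| + 1)) * ((2+2*T)*Y) := mul_le_mul_of_nonneg_left (hvb t ht) h6
        _ = _ := by ring
    nlinarith
  rw [intervalIntegral.integral_sub iN iH, intervalIntegral.integral_add ((iN0.sub iH0).sub (iF.const_mul s)) (hk.const_mul _),
    intervalIntegral.integral_sub (iN0.sub iH0) (iF.const_mul s), intervalIntegral.integral_sub iN0 iH0,
    intervalIntegral.integral_const_mul, intervalIntegral.integral_const_mul, hfirst,
    intervalIntegral.integral_add (ha.abs.const_mul K) intervalIntegrable_const,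
    intervalIntegral.integral_const_mul, intervalIntegral.integral_div, intervalIntegral.integral_div] at key
  simp only [intervalIntegral.integral_const, sub_zero, smul_eq_mul, mul_one] at key
  rw [e1, e2]
  have h7 : ∫ t in (0:ℝ)..T, (q t)^2 ≤ Y := by rw [hY]; nlinarith [sq_nonneg ζ.1]
  have h8 : s^2/2 * ∫ t in (0:ℝ)..T, (q t)^2 ≤ s^2/2 * Y := mul_le_mul_of_nonneg_left h7 (by positivity)
  nlinarith

lemma JJ_desc {T : ℝ} (hT : 0 < T) {a : ℝ → ℝ} (ha : IntervalIntegrable a volume 0 T)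
    {h H : C(ℝ, ℝ)} (hH : ∀ s, HasDerivAt H (h s) s) {K : ℝ} (hK0 : 0 ≤ K)
    (hK : ∀ s t, |h s - h t| ≤ K * |s - t|) {e : ℝ} (he0 : 0 ≤ e) (he1 : e ≤ 1) :
    ∃ κ > 0, ∀ z : ℝ × C(Icc (0:ℝ) T, ℝ), ∀ t : ℝ,
      JJ hT ha H e (z + t • (κ • ((VV hT ha h (UU hT e z) (rp hT), PP hT e (VV hT ha h (UU hT e z)) - z.2) :
        ℝ × C(Icc (0:ℝ) T, ℝ)))) ≤ JJ hT ha H e z - κ * (t - t^2/2) * DD hT ha h e z := by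
  set C := 1 + (K * (∫ t in (0:ℝ)..T, |a t|) + T) * (2 + 2 * T) with hC
  have hN : 0 ≤ ∫ t in (0:ℝ)..T, |a t| := intervalIntegral.integral_nonneg hT.le fun _ _ => abs_nonneg _
  have hC0 : 0 < C := by positivity
  refine ⟨1 / C, by positivity, fun z t => ?_⟩
  rw [smul_smul]
  refine (JJ_taylor hT ha hH hK0 hK he0 he1 z _ _).trans (le_of_eq ?_)
  simp only [← hC]
  have : ∫ s in (0:ℝ)..T, xt hT (PP hT e (VV hT ha h (UU hT e z)) - z.2) s *
      xt hT (z.2 - PP hT e (VV hT ha h (UU hT e z))) s = - ∫ s in (0:ℝ)..T, (xt hT (PP hT e (VV hT ha h (UU hT e z)) - z.2) s)^2 := by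
    rw [← intervalIntegral.integral_neg]
    apply intervalIntegral.integral_congr
    intro s _
    simp [xt, IccExtend]; ring
  rw [this, DD]
  set G := ∫ s in (0:ℝ)..T, (xt hT (PP hT e (VV hT ha h (UU hT e z)) - z.2) s)^2
  set W := VV hT ha h (UU hT e z) (rp hT)
  field_simp
  ring


lemma aux_compact {T : ℝ} (hT : 0 < T) {y : ℕ → C(Icc (0:ℝ) T, ℝ)} {R : ℝ} (hy : ∀ n, ‖y n‖ ≤ R) :
    ∃ (φ : ℕ → ℕ) (G : C(Icc (0:ℝ) T, ℝ)), StrictMono φ ∧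
      Tendsto (fun n => AI hT (one_ii T) (y (φ n))) atTop (nhds G) := by
  have hR : 0 ≤ R := (norm_nonneg _).trans (hy 0)
  let ι := ContinuousMap.isometryEquivBoundedOfCompact (Icc (0:ℝ) T) ℝ
  let A : Set (BoundedContinuousFunction (Icc (0:ℝ) T) ℝ) := range fun n => ι (AI hT (one_ii T) (y n))
  have hlip : ∀ n (x x' : Icc (0:ℝ) T), dist (AI hT (one_ii T) (y n) x) (AI hT (one_ii T) (y n) x') ≤ R * dist x x' := by
    intro n x x'
    rw [AI1_apply, AI1_apply, Real.dist_eq, intervalIntegral.integral_interval_sub_left (xt_ii hT _ _ _) (xt_ii hT _ _ _),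
      ← Real.norm_eq_abs]
    refine (intervalIntegral.norm_integral_le_of_norm_le_const (C := R) fun t _ => (xt_le hT (y n) t).trans (hy n)).trans ?_
    rw [Subtype.dist_eq, Real.dist_eq]
  have hcomp : IsCompact (closure A) := by
    apply BoundedContinuousFunction.arzela_ascoli (Metric.closedBall (0:ℝ) (R * T)) (isCompact_closedBall _ _)
    · rintro f x ⟨n, rfl⟩
      rw [mem_closedBall_zero_iff]
      have h1 := hlip n x ⟨0, le_rfl, hT.le⟩
      have h0 : AI hT (one_ii T) (y n) ⟨0, le_rfl, hT.le⟩ = 0 := by rw [AI1_apply]; simp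
      rw [h0, dist_zero_right] at h1
      refine h1.trans (mul_le_mul_of_nonneg_left ?_ hR)
      rw [Subtype.dist_eq, Real.dist_eq, sub_zero, abs_of_nonneg x.2.1]
      exact x.2.2
    · apply LipschitzWith.uniformEquicontinuous _ (K := R.toNNReal) _ |>.equicontinuous
      rintro ⟨f, n, rfl⟩
      apply LipschitzWith.of_dist_le_mul
      intro x x'
      rw [Real.coe_toNNReal _ hR]
      exact hlip n x x'
  obtain ⟨f, -, φ, hφ, hf⟩ := hcomp.tendsto_subseq (x := fun n => ι (AI hT (one_ii T) (y n)))
    (fun n => subset_closure ⟨n, rfl⟩)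
  refine ⟨φ, ι.symm f, hφ, ?_⟩
  have := (ι.symm.continuous.tendsto f).comp hf
  refine this.congr fun n => ?_
  simp

lemma aux_ps {T : ℝ} (hT : 0 < T) {a : ℝ → ℝ} (ha : IntervalIntegrable a volume 0 T) (e : ℝ) (h : C(ℝ, ℝ))
    {u w : ℕ → C(Icc (0:ℝ) T, ℝ)} {c : ℕ → ℝ} {B : ℝ} (hB : ∀ n, ‖u n‖ ≤ B)
    (hw : Tendsto (fun n => w n - h.comp (u n)) atTop (nhds 0))
    (hV : Tendsto (fun n => (AI hT ha (w n) + AI hT (one_ii T) (ngC.comp (u n))) (rp hT)) atTop (nhds 0))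
    (hu : Tendsto (fun n => u n - c n • (1 : C(Icc (0:ℝ) T, ℝ)) - AI hT (one_ii T) (PP hT e
      (AI hT ha (w n) + AI hT (one_ii T) (ngC.comp (u n))))) atTop (nhds 0)) :
    ∃ (φ : ℕ → ℕ) (v : C(Icc (0:ℝ) T, ℝ)) (k : ℝ), StrictMono φ ∧ Tendsto (fun n => u (φ n)) atTop (nhds v) ∧
      Tendsto (fun n => AI hT ha (w (φ n)) + AI hT (one_ii T) (ngC.comp (u (φ n)))) atTop (nhds (VV hT ha h v)) ∧
      VV hT ha h v (rp hT) = 0 ∧ v = k • (1 : C(Icc (0:ℝ) T, ℝ)) + AI hT (one_ii T) (PP hT e (VV hT ha h v)) := by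
  have hcb : ∀ f : C(ℝ, ℝ), ∃ M, ∀ n, ‖f.comp (u n)‖ ≤ M := by
    intro f
    obtain ⟨M, hM⟩ := (isCompact_Icc (a := -B) (b := B)).exists_bound_of_continuousOn f.continuous.continuousOn
    refine ⟨max M 0, fun n => ?_⟩
    rw [ContinuousMap.norm_le _ (le_max_right _ _)]
    intro x
    exact (hM _ (abs_le.1 (((u n).norm_coe_le_norm x).trans (hB n)))).trans (le_max_left _ _)
  obtain ⟨M1, hM1⟩ := hcb h
  obtain ⟨M2, hM2⟩ := hcb ngC
  obtain ⟨M3, hM3⟩ := (Metric.isBounded_range_of_tendsto _ hw).exists_norm_le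
  obtain ⟨M4, hM4⟩ := (Metric.isBounded_range_of_tendsto _ hu).exists_norm_le
  set V : ℕ → C(Icc (0:ℝ) T, ℝ) := fun n => AI hT ha (w n) + AI hT (one_ii T) (ngC.comp (u n)) with hVd
  have hwb : ∀ n, ‖w n‖ ≤ M3 + M1 := fun n => by
    have h1 := hM3 _ ⟨n, rfl⟩
    have h2 := norm_le_norm_sub_add (w n) (h.comp (u n))
    simp only at h1
    linarith [hM1 n]
  obtain ⟨M5, hM5⟩ : ∃ M5, ∀ n, ‖V n‖ ≤ M5 := by
    refine ⟨‖AI hT ha‖ * (M3 + M1) + ‖AI hT (one_ii T)‖ * M2, fun n => (norm_add_le _ _).trans (add_le_add ?_ ?_)⟩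
    · exact ((AI hT ha).le_opNorm _).trans (mul_le_mul_of_nonneg_left (hwb n) (norm_nonneg _))
    · exact ((AI hT (one_ii T)).le_opNorm _).trans (mul_le_mul_of_nonneg_left (hM2 n) (norm_nonneg _))
  have hM50 : 0 ≤ M5 := (norm_nonneg _).trans (hM5 0)
  obtain ⟨M6, hM6⟩ : ∃ M6, ∀ n, ‖PP hT e (V n)‖ ≤ M6 := by
    refine ⟨‖PE hT e‖ * (M5 * ‖(1 : C(Icc (0:ℝ) T, ℝ))‖ + M5), fun n => ?_⟩
    refine ((PE hT e).le_opNorm _).trans (mul_le_mul_of_nonneg_left ?_ (norm_nonneg _))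
    refine (norm_sub_le _ _).trans (add_le_add ?_ (hM5 n))
    rw [norm_smul]
    exact mul_le_mul_of_nonneg_right (((V n).norm_coe_le_norm _).trans (hM5 n)) (norm_nonneg _)
  have h0m : (0:ℝ) ∈ Icc 0 T := ⟨le_rfl, hT.le⟩
  have hcB : ∀ n, |c n| ≤ M4 + B := by
    intro n
    have h1 := hM4 _ ⟨n, rfl⟩
    have h2 := (ContinuousMap.norm_coe_le_norm _ (⟨0, h0m⟩ : Icc (0:ℝ) T)).trans h1
    have h3 := ((u n).norm_coe_le_norm (⟨0, h0m⟩ : Icc (0:ℝ) T)).trans (hB n)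
    have h4 : (AI hT (one_ii T)) (PP hT e (V n)) ⟨0, h0m⟩ = 0 := by rw [AI1_apply]; simp
    simp only [ContinuousMap.sub_apply, ContinuousMap.smul_apply, ContinuousMap.one_apply, smul_eq_mul, mul_one, h4,
      sub_zero, Real.norm_eq_abs] at h2 h3
    rw [abs_le] at *
    constructor <;> linarith [h2.1, h2.2, h3.1, h3.2]
  obtain ⟨φ, G, hφ, hG⟩ := aux_compact hT hM6
  obtain ⟨k, -, ψ, hψ, hk⟩ := (isCompact_Icc (a := -(M4+B)) (b := M4+B)).tendsto_subseq (x := fun n => c (φ n))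
    (fun n => abs_le.1 (hcB _))
  have hχ : StrictMono (fun n => φ (ψ n)) := hφ.comp hψ
  set χ := fun n => φ (ψ n) with hχd
  have hGχ : Tendsto (fun n => AI hT (one_ii T) (PP hT e (V (χ n)))) atTop (nhds G) := hG.comp hψ.tendsto_atTop
  have hkχ : Tendsto (fun n => c (χ n)) atTop (nhds k) := hk
  have huχ : Tendsto (fun n => u (χ n)) atTop (nhds (k • (1 : C(Icc (0:ℝ) T, ℝ)) + G)) := by
    have := ((hu.comp hχ.tendsto_atTop).add ((hkχ.smul_const (1 : C(Icc (0:ℝ) T, ℝ))).add hGχ))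
    rw [zero_add] at this
    refine this.congr fun n => ?_
    simp only [Function.comp]
    abel
  set v := k • (1 : C(Icc (0:ℝ) T, ℝ)) + G with hv
  have hhχ : Tendsto (fun n => h.comp (u (χ n))) atTop (nhds (h.comp v)) :=
    ((ContinuousMap.continuous_postcomp h).tendsto v).comp huχ
  have hnχ : Tendsto (fun n => ngC.comp (u (χ n))) atTop (nhds (ngC.comp v)) :=
    ((ContinuousMap.continuous_postcomp ngC).tendsto v).comp huχ
  have hwχ : Tendsto (fun n => w (χ n)) atTop (nhds (h.comp v)) := by
    have := (hw.comp hχ.tendsto_atTop).add hhχ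
    rw [zero_add] at this
    refine this.congr fun n => ?_
    simp [Function.comp]
  have hVχ : Tendsto (fun n => V (χ n)) atTop (nhds (VV hT ha h v)) :=
    (((AI hT ha).continuous.tendsto _).comp hwχ).add (((AI hT (one_ii T)).continuous.tendsto _).comp hnχ)
  refine ⟨χ, v, k, hχ, huχ, hVχ, ?_, ?_⟩
  · have h1 := ((ContinuousMap.evalCLM ℝ (rp hT)).continuous.tendsto (VV hT ha h v)).comp hVχ
    exact tendsto_nhds_unique h1 (hV.comp hχ.tendsto_atTop)
  · have h1 := ((AI hT (one_ii T)).continuous.tendsto _).comp (((PP_cont hT e).tendsto _).comp hVχ)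
    have : G = AI hT (one_ii T) (PP hT e (VV hT ha h v)) := tendsto_nhds_unique hGχ h1
    rw [← this]

lemma aux_sol {T : ℝ} (hT : 0 < T) {a : ℝ → ℝ} (ha : IntervalIntegrable a volume 0 T) {e : ℝ} (h : C(ℝ, ℝ))
    {v : C(Icc (0:ℝ) T, ℝ)} {k : ℝ} (hV : VV hT ha h v (rp hT) = 0)
    (hv : v = k • (1 : C(Icc (0:ℝ) T, ℝ)) + AI hT (one_ii T) (PP hT e (VV hT ha h v))) :
    ∃ p : ℝ → ℝ, IsSolOn T (fun t => a t * h (xt hT v t) + max (-(xt hT v t)) 0) (xt hT v) p ∧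
      p T = p 0 ∧ (e = 0 → p 0 = 0) ∧ (e = 1 → xt hT v 0 = xt hT v T) := by
  have h0m : (0:ℝ) ∈ Icc 0 T := ⟨le_rfl, hT.le⟩
  have hTm : T ∈ Icc 0 T := ⟨hT.le, le_rfl⟩
  set p := xt hT (PP hT e (VV hT ha h v)) with hp
  have hpc : Continuous p := xt_cont hT _
  have hvx : ∀ x ∈ Icc 0 T, xt hT v x = k + ∫ t in (0:ℝ)..x, p t := by
    intro x hx
    rw [xt_of_mem hT _ hx]
    conv_lhs => rw [hv]
    simp [AI1_apply, hp]
  set κ := e / T * ∫ t in (0:ℝ)..T, xt hT (VV hT ha h v (rp hT) • 1 - VV hT ha h v) t with hκ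
  have hpx : ∀ x, p x = - xt hT (VV hT ha h v) x - κ := by
    intro x
    rw [hp, PP, PE_apply, ← hκ]
    congr 1
    rw [hV]
    simp [xt, IccExtend]
  have hp0 : p 0 = -κ := by rw [hpx, VV_apply hT ha h v h0m]; simp
  have hpT : p T = -κ := by rw [hpx, xt_of_mem hT _ hTm]; change -(VV hT ha h v (rp hT)) - κ = _; rw [hV]; simp
  refine ⟨p, ⟨?_, hpc.continuousOn, ?_⟩, by rw [hp0, hpT], ?_, ?_⟩
  · intro x hx
    have h1 : HasDerivAt (fun x => k + ∫ t in (0:ℝ)..x, p t) (p x) x :=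
      (intervalIntegral.integral_hasDerivAt_right (hpc.intervalIntegrable _ _)
        hpc.aestronglyMeasurable.stronglyMeasurableAtFilter hpc.continuousAt).const_add k
    exact h1.hasDerivWithinAt.congr hvx (hvx x hx)
  · intro x hx
    rw [hp0, hpx, VV_apply hT ha h v hx]; ring
  · intro he
    rw [hp0, hκ, he]; simp
  · intro he
    rw [hvx 0 h0m, hvx T hTm]
    have : ∫ t in (0:ℝ)..T, p t = 0 := by
      simp only [hp, PP, PE_apply]
      rw [intervalIntegral.integral_sub (xt_ii hT _ _ _) intervalIntegrable_const]
      simp [he]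
      field_simp; simp
    rw [this]; simp


lemma PE_idem {T : ℝ} (hT : 0 < T) {e : ℝ} (he : e = 0 ∨ e = 1) (q : C(Icc (0:ℝ) T, ℝ)) :
    PE hT e (PE hT e q) = PE hT e q := by
  ext x
  have h1 := PE_apply hT e (PE hT e q) x
  have h2 := PE_apply hT e q x
  rw [xt_of_mem hT _ x.2] at h1
  change PE hT e (PE hT e q) x = _ at h1
  rw [h1]
  have h3 : xt hT (PE hT e q) x = PE hT e q x := xt_of_mem hT _ x.2
  rw [h3]
  suffices h : e / T * ∫ t in (0:ℝ)..T, xt hT (PE hT e q) t = 0 by rw [h, sub_zero]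
  rcases he with rfl | rfl
  · simp
  · simp only [PE_apply]
    rw [intervalIntegral.integral_sub (xt_ii hT _ _ _) intervalIntegrable_const]
    simp
    right
    field_simp; simp

lemma PP_smul {T : ℝ} (hT : 0 < T) (e s : ℝ) (V : C(Icc (0:ℝ) T, ℝ)) : PP hT e (s • V) = s • PP hT e V := by
  rw [PP, PP, ← map_smul]
  congr 1
  rw [smul_sub, smul_smul]; rfl

lemma ng_smul {T : ℝ} {s : ℝ} (hs : 0 ≤ s) (u : C(Icc (0:ℝ) T, ℝ)) : ngC.comp (s • u) = s • ngC.comp u := by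
  ext x
  simp only [ngC, ContinuousMap.comp_apply, ContinuousMap.coe_mk, ContinuousMap.smul_apply, smul_eq_mul]
  rw [mul_max_of_nonneg _ _ hs]; simp

lemma xt_forall {T : ℝ} (hT : 0 < T) {v : C(Icc (0:ℝ) T, ℝ)} (h : ∀ x ∈ Icc 0 T, 0 ≤ xt hT v x) (t : ℝ) :
    0 ≤ xt hT v t := by
  have := h _ (projIcc 0 T hT.le t).2
  rw [xt_of_mem hT v (projIcc 0 T hT.le t).2] at this
  exact this

lemma aux_sol_pos {T : ℝ} (hT : 0 < T) {a : ℝ → ℝ} (ha : IntervalIntegrable a volume 0 T) {e : ℝ}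
    (he : e = 0 ∨ e = 1) {h : C(ℝ, ℝ)} (h0 : ∀ s ≤ 0, h s = 0)
    {v : C(Icc (0:ℝ) T, ℝ)} {k : ℝ} (hV : VV hT ha h v (rp hT) = 0)
    (hv : v = k • (1 : C(Icc (0:ℝ) T, ℝ)) + AI hT (one_ii T) (PP hT e (VV hT ha h v))) :
    ∃ p : ℝ → ℝ, IsSolOn T (fun t => a t * h (xt hT v t)) (xt hT v) p ∧ BCond T (xt hT v) p ∧
      (e = 0 → p 0 = 0) ∧ (e = 1 → xt hT v 0 = xt hT v T) ∧ ∀ x, 0 ≤ xt hT v x := by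
  obtain ⟨p, hp, hb, h1, h2⟩ := aux_sol hT ha h hV hv
  have hB : BCond T (xt hT v) p := ⟨hb, he.imp h1 h2⟩
  have hpos := xt_forall hT (aux_pos hT ha h.continuous h0 hp hB)
  refine ⟨p, ?_, hB, h1, h2, hpos⟩
  have : (fun t => a t * h (xt hT v t) + max (-(xt hT v t)) 0) = fun t => a t * h (xt hT v t) := by
    funext t
    rw [max_eq_right (by linarith [hpos t])]; simp
  rwa [this] at hp

lemma aux_critical {T : ℝ} (hT : 0 < T) {a : ℝ → ℝ} (ha : IntervalIntegrable a volume 0 T) {e : ℝ}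
    (he : e = 0 ∨ e = 1) {C M : ℝ} (hM : 0 < M)
    (hap : ∀ h : ℝ → ℝ, Continuous h → (∀ s, 0 ≤ h s) → ∀ R : ℝ, 0 < R → (∀ s, R ≤ s → M * s ≤ h s) →
      ∀ u p : ℝ → ℝ, IsSolOn T (fun t => a t * h (u t)) u p → (∀ x ∈ Icc 0 T, 0 ≤ u x) → BCond T u p →
      ∀ x ∈ Icc 0 T, u x ≤ C * R)
    {h H : C(ℝ, ℝ)} (h0 : ∀ s ≤ 0, h s = 0) (hH0 : H 0 = 0) {B0 : ℝ}
    (hB0 : ∀ s, |h s - M * max s 0| ≤ B0) {α : ℝ} (hα : 0 < α) {z : ℕ → ℝ × C(Icc (0:ℝ) T, ℝ)}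
    (hJ : ∀ n, α ≤ JJ hT ha H e (z n)) (hD : Tendsto (fun n => DD hT ha h e (z n)) atTop (nhds 0)) :
    ∃ u p : ℝ → ℝ, IsSolOn T (fun t => a t * h (u t)) u p ∧ BCond T u p ∧
      (e = 0 → p 0 = 0) ∧ (e = 1 → u 0 = u T) ∧ (∀ x, 0 ≤ u x) ∧ ∃ x ∈ Icc 0 T, u x ≠ 0 := by
  have he0 : 0 ≤ e := by rcases he with rfl | rfl <;> norm_num
  have he1 : e ≤ 1 := by rcases he with rfl | rfl <;> norm_num
  have hB00 : 0 ≤ B0 := (abs_nonneg _).trans (hB0 0)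
  set u := fun n => UU hT e (z n) with hu
  set V := fun n => VV hT ha h (u n) with hV
  set P := fun n => PP hT e (V n) with hP
  set G := fun n => ∫ t in (0:ℝ)..T, (xt hT (P n - (z n).2) t)^2 with hG
  have hG0 : ∀ n, 0 ≤ G n := fun n => intervalIntegral.integral_nonneg hT.le fun _ _ => sq_nonneg _
  have hDe : ∀ n, DD hT ha h e (z n) = (V n (rp hT))^2 + G n := fun n => rfl
  have hGt : Tendsto G atTop (nhds 0) := squeeze_zero hG0 (fun n => by
    rw [hDe]; nlinarith [sq_nonneg (V n (rp hT))]) hD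
  have hVt : Tendsto (fun n => V n (rp hT)) atTop (nhds 0) := by
    have : Tendsto (fun n => (V n (rp hT))^2) atTop (nhds 0) :=
      squeeze_zero (fun n => sq_nonneg _) (fun n => by rw [hDe]; linarith [hG0 n]) hD
    have h2 := this.sqrt
    simp only [Real.sqrt_sq_eq_abs, Real.sqrt_zero] at h2
    exact tendsto_zero_iff_abs_tendsto_zero _ |>.2 h2
  set η := fun n => u n - (z n).1 • (1 : C(Icc (0:ℝ) T, ℝ)) - AI hT (one_ii T) (P n) with hη
  have hηt : Tendsto η atTop (nhds 0) := by
    apply squeeze_zero_norm (a := fun n => Real.sqrt (T * G n))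
    · intro n
      rw [ContinuousMap.norm_le _ (Real.sqrt_nonneg _)]
      intro x
      have e1 : η n = AI hT (one_ii T) (PE hT e ((z n).2 - P n)) := by
        have : PE hT e (P n) = P n := PE_idem hT he _
        rw [map_sub, map_sub, this]
        simp only [hη, hu, UU]
        simp
      rw [e1, AI1_apply, Real.norm_eq_abs]
      apply Real.abs_le_sqrt
      refine (aux_cs hT (xt_cont hT _) x.2).trans (mul_le_mul_of_nonneg_left ?_ hT.le)
      refine (PE_norm hT he0 he1 _).trans (le_of_eq ?_)
      apply intervalIntegral.integral_congr
      intro t _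
      simp [xt, IccExtend]; ring
    · have := (hGt.const_mul T).sqrt
      simpa using this
  by_cases hbd : ∃ B, ∀ n, ‖u n‖ ≤ B
  · obtain ⟨B, hB⟩ := hbd
    obtain ⟨φ, v, k, hφ, huv, hVv, hV0, hv⟩ := aux_ps hT ha e h (u := u) (w := fun n => h.comp (u n))
      (c := fun n => (z n).1) hB (by simp) hVt hηt
    obtain ⟨p, hp1, hp2, hp3, hp4, hp5⟩ := aux_sol_pos hT ha he h0 hV0 hv
    refine ⟨xt hT v, p, hp1, hp2, hp3, hp4, hp5, ?_⟩
    by_contra! hcon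
    have hv0 : v = 0 := by
      ext x
      have := hcon x x.2
      rw [xt_of_mem hT v x.2] at this
      exact this
    rw [hv0] at huv hVv
    have hev : Continuous fun V : C(Icc (0:ℝ) T, ℝ) => V (rp hT) := (ContinuousMap.evalCLM ℝ (rp hT)).continuous
    have hVV0 : VV hT ha h 0 = 0 := by
      have c1 : h.comp (0 : C(Icc (0:ℝ) T, ℝ)) = 0 := by ext x; simp [h0]
      have c2 : ngC.comp (0 : C(Icc (0:ℝ) T, ℝ)) = 0 := by ext x; simp [ngC]
      rw [VV, c1, c2]; simp
    have t1 : Tendsto (fun n => AI hT (one_ii T) (P (φ n) * P (φ n)) (rp hT)) atTop (nhds 0) := by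
      have hc : Continuous fun V => AI hT (one_ii T) (PP hT e V * PP hT e V) (rp hT) :=
        hev.comp ((AI hT (one_ii T)).continuous.comp ((PP_cont hT e).mul (PP_cont hT e)))
      have := (hc.tendsto _).comp hVv
      rw [hVV0] at this
      have hP0 : PP hT e 0 = 0 := by simp [PP]
      rw [hP0] at this
      simp only [mul_zero, map_zero, ContinuousMap.zero_apply] at this
      exact this
    have t2 : Tendsto (fun n => AI hT ha (H.comp (u (φ n))) (rp hT)) atTop (nhds 0) := by
      have hc : Continuous fun u => AI hT ha (H.comp u) (rp hT) :=
        hev.comp ((AI hT ha).continuous.comp (ContinuousMap.continuous_postcomp H))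
      have := (hc.tendsto _).comp huv
      have c1 : H.comp (0 : C(Icc (0:ℝ) T, ℝ)) = 0 := by ext x; simp [hH0]
      rw [c1, map_zero] at this
      exact this
    have t3 : Tendsto (fun n => AI hT (one_ii T) (ngC.comp (u (φ n)) * ngC.comp (u (φ n))) (rp hT)) atTop (nhds 0) := by
      have hp := ContinuousMap.continuous_postcomp (X := Icc (0:ℝ) T) ngC
      have hc : Continuous fun u => AI hT (one_ii T) (ngC.comp u * ngC.comp u) (rp hT) :=
        hev.comp ((AI hT (one_ii T)).continuous.comp (hp.mul hp))
      have := (hc.tendsto _).comp huv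
      have c1 : ngC.comp (0 : C(Icc (0:ℝ) T, ℝ)) = 0 := by ext x; simp [ngC]
      rw [c1, mul_zero, map_zero] at this
      exact this
    have hlim := ((t1.add (hGt.comp hφ.tendsto_atTop)).sub t2).add (t3.div_const 2)
    have : α ≤ 0 + 0 - 0 + 0 / 2 := by
      refine ge_of_tendsto' hlim fun n => ?_
      refine (hJ (φ n)).trans ?_
      rw [JJ]
      have h1 : AI hT (one_ii T) ((z (φ n)).2 * (z (φ n)).2) (rp hT) / 2 ≤
          AI hT (one_ii T) (P (φ n) * P (φ n)) (rp hT) + G (φ n) := by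
        have hGe : G (φ n) = ∫ t in (0:ℝ)..T, xt hT ((P (φ n) - (z (φ n)).2) * (P (φ n) - (z (φ n)).2)) t := by
          simp only [hG]
          apply intervalIntegral.integral_congr
          intro t _
          simp only [sq]; rfl
        rw [AI1_apply, AI1_apply, hGe, ← intervalIntegral.integral_div]
        change _ ≤ (∫ t in (0:ℝ)..T, xt hT (P (φ n) * P (φ n)) t) + _
        rw [← intervalIntegral.integral_add (xt_ii hT _ _ _) (xt_ii hT _ _ _)]
        apply intervalIntegral.integral_mono hT.le ((xt_ii hT _ _ _).div_const 2)
          ((xt_ii hT _ _ _).add (xt_ii hT _ _ _))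
        intro t
        simp only [xt, IccExtend, Function.comp, ContinuousMap.mul_apply, ContinuousMap.sub_apply]
        set A := P (φ n) (projIcc 0 T hT.le t)
        set B := (z (φ n)).2 (projIcc 0 T hT.le t)
        nlinarith [sq_nonneg (2 * A - B)]
      simp only [Function.comp]
      linarith
    linarith
  · exfalso
    have hfr : ∀ N : ℕ, ∃ᶠ n in atTop, (N:ℝ) + 1 < ‖u n‖ := by
      intro N hN
      apply hbd
      have : IsBoundedUnder (· ≤ ·) atTop (fun n => ‖u n‖) :=
        ⟨(N:ℝ)+1, by simpa using hN⟩
      obtain ⟨B, hB⟩ := this.bddAbove_range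
      exact ⟨B, fun n => hB ⟨n, rfl⟩⟩
    obtain ⟨φ, hφ, hφu⟩ := extraction_forall_of_frequently hfr
    set l := fun n => ‖u (φ n)‖⁻¹ with hl
    have hlp : ∀ n, 0 < ‖u (φ n)‖ := fun n => lt_of_le_of_lt (by positivity) (hφu n)
    have hl0 : ∀ n, 0 ≤ l n := fun n => (inv_pos.2 (hlp n)).le
    have hlt : Tendsto l atTop (nhds 0) := by
      apply Tendsto.inv_tendsto_atTop
      refine tendsto_atTop_mono (fun n => ?_) tendsto_natCast_atTop_atTop
      linarith [hφu n]
    let hi : C(ℝ, ℝ) := ⟨fun s => M * max s 0, by fun_prop⟩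
    have hsc : ∀ n, AI hT ha (l n • h.comp (u (φ n))) + AI hT (one_ii T) (ngC.comp (l n • u (φ n))) = l n • V (φ n) := by
      intro n
      rw [ng_smul (hl0 n), map_smul, map_smul, ← smul_add]; rfl
    obtain ⟨ψ, v, k, hψ, huv, hVv, hV0, hv⟩ := aux_ps hT ha e hi (u := fun n => l n • u (φ n))
      (w := fun n => l n • h.comp (u (φ n))) (c := fun n => l n * (z (φ n)).1) (B := 1)
      (fun n => by rw [norm_smul, Real.norm_of_nonneg (hl0 n), hl]; exact (inv_mul_cancel₀ (hlp n).ne').le)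
      (by
        apply squeeze_zero_norm (a := fun n => l n * B0)
        · intro n
          rw [ContinuousMap.norm_le _ (mul_nonneg (hl0 n) hB00)]
          intro x
          simp only [hi, ContinuousMap.sub_apply, ContinuousMap.smul_apply, ContinuousMap.comp_apply, ContinuousMap.coe_mk,
            smul_eq_mul]
          have : max (l n * u (φ n) x) 0 = l n * max (u (φ n) x) 0 := by
            rw [mul_max_of_nonneg _ _ (hl0 n), mul_zero]
          rw [this, show l n * h (u (φ n) x) - M * (l n * max (u (φ n) x) 0) = l n * (h (u (φ n) x) - M * max (u (φ n) x) 0) by ring,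
            norm_mul, Real.norm_of_nonneg (hl0 n)]
          exact mul_le_mul_of_nonneg_left (hB0 _) (hl0 n)
        · simpa using hlt.mul_const B0)
      (by
        simp only [hsc]
        simpa using hlt.mul (hVt.comp hφ.tendsto_atTop))
      (by
        simp only [hsc, PP_smul]
        simp only [map_smul]
        have := hlt.smul (hηt.comp hφ.tendsto_atTop)
        simp only [zero_smul] at this
        refine this.congr fun n => ?_
        simp only [Function.comp, hη, smul_sub, smul_smul]; rfl)
    have hn1 : ‖v‖ = 1 := by
      have h1 := huv.norm
      refine tendsto_nhds_unique h1 ?_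
      refine tendsto_const_nhds.congr fun n => ?_
      rw [norm_smul, Real.norm_of_nonneg (hl0 _), hl]
      exact (inv_mul_cancel₀ (hlp _).ne').symm
    obtain ⟨p, hp1, hp2, hp3, hp4, hp5⟩ := aux_sol_pos hT ha he (h := hi) (fun s hs => by simp [hi, max_eq_right hs]) hV0 hv
    have hv0 : v = 0 := by
      ext x
      have h1 : ∀ R > 0, xt hT v x ≤ C * R := fun R hR => hap hi hi.continuous
        (fun s => mul_nonneg hM.le (le_max_right _ _)) R hR
        (fun s hs => mul_le_mul_of_nonneg_left (le_max_left _ _) hM.le) _ p hp1 (fun x _ => hp5 x) hp2 x x.2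
      have h2 := hp5 x
      rw [xt_of_mem hT v x.2] at h1 h2
      change 0 ≤ v x at h2
      change ∀ R > 0, v x ≤ C * R at h1
      simp only [ContinuousMap.zero_apply]
      apply le_antisymm _ h2
      have t : Tendsto (fun R : ℝ => C * R) (nhdsWithin 0 (Ioi 0)) (nhds (C * 0)) :=
        ((continuous_const.mul continuous_id).tendsto 0).mono_left nhdsWithin_le_nhds
      rw [mul_zero] at t
      exact ge_of_tendsto t (by filter_upwards [self_mem_nhdsWithin] with R hR using h1 R hR)
    rw [hv0, norm_zero] at hn1
    norm_num at hn1


set_option maxHeartbeats 800000 in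
lemma aux_geom {T : ℝ} (hT : 0 < T) {a : ℝ → ℝ} (ha : IntervalIntegrable a volume 0 T)
    (hneg : ∫ x in (0:ℝ)..T, a x < 0) {e : ℝ} (he0 : 0 ≤ e) (he1 : e ≤ 1)
    {h H : C(ℝ, ℝ)} (hH : ∀ s, HasDerivAt H (h s) s) (hnn : ∀ s, 0 ≤ h s)
    (hH0 : ∀ s ≤ 0, H s = 0) (hHm : Monotone H) (hHp : ∀ s > 0, 0 < H s)
    (hε : ∀ ε > 0, ∃ ρ > 0, ∀ s ≤ ρ, ∀ t ≤ ρ, |h s - h t| ≤ ε * |s - t|) :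
    ∃ ρ > 0, ∃ α > 0, ∀ z : ℝ × C(Icc (0:ℝ) T, ℝ),
      |z.1| + Real.sqrt (T * ∫ t in (0:ℝ)..T, (xt hT z.2 t)^2) = ρ → α ≤ JJ hT ha H e z := by
  set N := ∫ t in (0:ℝ)..T, |a t| with hN
  have hN0 : 0 ≤ N := intervalIntegral.integral_nonneg hT.le fun _ _ => abs_nonneg _
  set A := -∫ x in (0:ℝ)..T, a x with hA
  have hA0 : 0 < A := by rw [hA]; linarith
  obtain ⟨ε, hε0, hε1, hε2⟩ : ∃ ε > 0, N * ε / 2 ≤ 1 / (8 * T) ∧ 4 * T * N^2 * ε ≤ A / 2 := by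
    have p1 : 0 < (1 / (8*T)) / (N + 1) := by positivity
    have p2 : 0 < (A / 2) / (4 * T * N^2 + 1) := by positivity
    refine ⟨min ((1 / (8*T)) / (N + 1)) ((A / 2) / (4 * T * N^2 + 1)), lt_min p1 p2, ?_, ?_⟩
    · have h1 := min_le_left ((1 / (8*T)) / (N + 1)) ((A / 2) / (4 * T * N^2 + 1))
      rw [le_div_iff₀ (by positivity)] at h1
      have h2 : 0 < min ((1 / (8*T)) / (N + 1)) ((A / 2) / (4 * T * N^2 + 1)) := lt_min p1 p2
      nlinarith
    · have h1 := min_le_right ((1 / (8*T)) / (N + 1)) ((A / 2) / (4 * T * N^2 + 1))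
      rw [le_div_iff₀ (by positivity)] at h1
      have h2 : 0 < min ((1 / (8*T)) / (N + 1)) ((A / 2) / (4 * T * N^2 + 1)) := lt_min p1 p2
      nlinarith
  obtain ⟨ρ, hρ, hLip⟩ := hε ε hε0
  have hHnn : ∀ s, 0 ≤ H s := fun s => by
    rcases le_total s 0 with hs | hs
    · exact (hH0 s hs).ge
    · have := hHm hs; rw [hH0 0 le_rfl] at this; exact this
  have htay : ∀ s ≤ ρ, ∀ d, s + d ≤ ρ → |H (s + d) - H s - h s * d| ≤ ε / 2 * d^2 := by
    intro s hs d hd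
    apply aux_taylor h.continuous hH
    intro t ht
    have h1 : s + t * d ≤ ρ := by
      have : s + t * d = (1 - t) * s + t * (s + d) := by ring
      rw [this]
      nlinarith [ht.1, ht.2]
    have := hLip _ h1 s hs
    rwa [add_sub_cancel_left, abs_mul t, abs_of_nonneg ht.1] at this
  have hsq : ∀ s ≤ ρ, (h s)^2 ≤ 2 * ε * H s := by
    intro s hs
    have h1 := htay s hs (-(h s / ε)) (by have := div_nonneg (hnn s) hε0.le; linarith)
    have h2 := hHnn (s + -(h s / ε))
    have h3 := (abs_le.1 h1).2
    have h4 : h s * (h s / ε) = (h s)^2/ε := by ring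
    have h5 : ε / 2 * (-(h s / ε))^2 = (h s)^2 / ε / 2 := by field_simp
    have h6 : (h s)^2 / ε ≤ 2 * H s := by
      rw [h5, mul_neg, h4] at h3; linarith
    rw [div_le_iff₀ hε0] at h6
    linarith
  refine ⟨ρ, hρ, min (ρ^2/(64*T)) (min (A/2 * H (ρ/2)) (T * ρ^2/8)), ?_, ?_⟩
  · have := hHp (ρ/2) (by linarith)
    exact lt_min (by positivity) (lt_min (by positivity) (by positivity))
  intro z hz
  set I := ∫ t in (0:ℝ)..T, (xt hT z.2 t)^2 with hI
  have hI0 : 0 ≤ I := intervalIntegral.integral_nonneg hT.le fun _ _ => sq_nonneg _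
  set y := Real.sqrt (T * I) with hy
  have hy0 : 0 ≤ y := Real.sqrt_nonneg _
  have hy2 : y^2 = T * I := Real.sq_sqrt (by positivity)
  set c := z.1 with hc
  set u := xt hT (UU hT e z) with hu
  have huc : Continuous u := xt_cont hT _
  have hosc : ∀ x ∈ Icc 0 T, |u x - c| ≤ y := fun x hx => Real.abs_le_sqrt (UU_osc hT he0 he1 z hx)
  have hcρ : c ≤ ρ := by linarith [le_abs_self c]
  have huρ : ∀ x ∈ Icc 0 T, u x ≤ ρ := fun x hx => by
    linarith [(abs_le.1 (hosc x hx)).2, le_abs_self c]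
  have hint : ∫ t in (0:ℝ)..T, a t * H (u t) ≤ ∫ t in (0:ℝ)..T, (a t * H c + |a t| * (h c * y + ε / 2 * y^2)) := by
    apply intervalIntegral.integral_mono_on hT.le (ha.mul_continuousOn (by fun_prop))
      ((ha.mul_const _).add (ha.abs.mul_const _))
    intro t ht
    have h1 := htay c hcρ (u t - c) (by linarith [huρ t ht])
    rw [add_sub_cancel] at h1
    have ho := hosc t ht
    have h2 : |H (u t) - H c| ≤ h c * y + ε / 2 * y^2 := by
      have h3 : |h c * (u t - c)| ≤ h c * y := by
        rw [abs_mul, abs_of_nonneg (hnn c)]; exact mul_le_mul_of_nonneg_left ho (hnn c)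
      have h4 : (u t - c)^2 ≤ y^2 := sq_le_sq' (by linarith [(abs_le.1 ho).1]) (abs_le.1 ho).2
      have h5 := abs_add_le (H (u t) - H c - h c * (u t - c)) (h c * (u t - c))
      rw [sub_add_cancel] at h5
      nlinarith
    have h6 := le_abs_self (a t * (H (u t) - H c))
    rw [abs_mul] at h6
    have h7 := mul_le_mul_of_nonneg_left h2 (abs_nonneg (a t))
    nlinarith
  rw [intervalIntegral.integral_add (ha.mul_const _) (ha.abs.mul_const _), intervalIntegral.integral_mul_const,
    intervalIntegral.integral_mul_const, ← hN] at hint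
  have hng0 : 0 ≤ ∫ t in (0:ℝ)..T, (max (-(u t)) 0)^2 :=
    intervalIntegral.integral_nonneg hT.le fun _ _ => sq_nonneg _
  have hJ : y^2/(4*T) + A/2 * H c + (∫ t in (0:ℝ)..T, (max (-(u t)) 0)^2)/2 ≤ JJ hT ha H e z := by
    rw [JJ_apply]
    change _ ≤ I / 2 - (∫ t in (0:ℝ)..T, a t * H (u t)) + (∫ t in (0:ℝ)..T, (max (-(u t)) 0)^2)/2
    have hI' : I / 2 = 2 * (y^2 / (4*T)) := by rw [hy2]; field_simp; ring
    have h1 := hsq c hcρ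
    have h2 : N * (h c * y) ≤ y^2/(8*T) + 2 * T * N^2 * (h c)^2 := by
      have : 0 ≤ (y - 4 * T * N * h c)^2 / (8 * T) := by positivity
      have e : (y - 4 * T * N * h c)^2 / (8 * T) = y^2/(8*T) + 2 * T * N^2 * (h c)^2 - N * (h c * y) := by
        field_simp; ring
      linarith
    have h3 : 2 * T * N^2 * (h c)^2 ≤ A / 2 * H c := by
      calc 2 * T * N^2 * (h c)^2 ≤ 2 * T * N^2 * (2 * ε * H c) := mul_le_mul_of_nonneg_left h1 (by positivity)
        _ = (4 * T * N^2 * ε) * H c := by ring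
        _ ≤ A/2 * H c := mul_le_mul_of_nonneg_right hε2 (hHnn c)
    have h4 : N * (ε / 2 * y^2) ≤ y^2/(8*T) := by
      calc N * (ε / 2 * y^2) = (N * ε / 2) * y^2 := by ring
        _ ≤ 1 / (8*T) * y^2 := mul_le_mul_of_nonneg_right hε1 (sq_nonneg _)
        _ = _ := by ring
    have h5 : y^2/(8*T) * 2 = y^2/(4*T) := by field_simp; ring
    have h6 : (∫ x in (0:ℝ)..T, a x) * H c = -(A * H c) := by rw [hA]; ring
    rw [h6] at hint
    nlinarith
  refine le_trans ?_ hJ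
  have hy4 : 0 ≤ y^2/(4*T) := by positivity
  have hAH : 0 ≤ A/2 * H c := mul_nonneg (by linarith) (hHnn c)
  rcases le_or_gt (ρ/4) y with h1 | h1
  · refine (min_le_left _ _).trans ?_
    have : ρ^2/(64*T) ≤ y^2/(4*T) := by
      rw [div_le_div_iff₀ (by positivity) (by positivity)]
      have : ρ^2 ≤ 16 * y^2 := by nlinarith
      nlinarith
    linarith
  · rcases le_total 0 c with h2 | h2
    · refine (min_le_right _ _).trans ((min_le_left _ _).trans ?_)
      rw [abs_of_nonneg h2] at hz
      have := hHm (show ρ/2 ≤ c by linarith)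
      nlinarith
    · refine (min_le_right _ _).trans ((min_le_right _ _).trans ?_)
      rw [abs_of_nonpos h2] at hz
      have : ∫ t in (0:ℝ)..T, (ρ/2)^2 ≤ ∫ t in (0:ℝ)..T, (max (-(u t)) 0)^2 := by
        apply intervalIntegral.integral_mono_on hT.le intervalIntegrable_const
          (Continuous.intervalIntegrable (by fun_prop) _ _)
        intro t ht
        have h3 := (abs_le.1 (hosc t ht)).2
        have h4 := le_max_left (-(u t)) 0
        apply pow_le_pow_left₀ (by linarith)
        linarith
      simp only [intervalIntegral.integral_const, sub_zero, smul_eq_mul] at this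
      have e8 : T * (ρ/2)^2 = T*ρ^2/8*2 := by ring
      linarith


lemma aux_bump {T : ℝ} (hT : 0 < T) {a : ℝ → ℝ} (ha : IntervalIntegrable a volume 0 T) (ha1 : CondA1 T a) :
    ∃ (p0 : C(Icc (0:ℝ) T, ℝ)) (w : ℝ → ℝ), Continuous w ∧ (∀ x ∈ Icc 0 T, ∫ t in (0:ℝ)..x, xt hT p0 t = w x) ∧
      (∀ x, 0 ≤ w x) ∧ w T = 0 ∧ (∀ᵐ t, t ∈ Icc 0 T → (0 ≤ a t ∨ w t = 0)) ∧
      0 < ∫ t in (0:ℝ)..T, a t * (w t)^2 := by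
  obtain ⟨m, σ, τ, hm, hst, -, hpos, hnz, -⟩ := ha1
  let i : Fin m := ⟨0, hm⟩
  obtain ⟨δ, hδ, hδ2, hA⟩ := aux_delta hT ha (hst i).1 (hst i).2.1 (hst i).2.2 (hpos i) (hnz i)
  have hs0 := (hst i).1
  have hst1 := (hst i).2.1
  have hτT := (hst i).2.2
  have hpi := hpos i
  set s := σ i
  set r := τ i
  let φ : ℝ → ℝ := fun x => (x - s) * (r - x)
  let w : ℝ → ℝ := fun x => (max (φ x) 0)^2
  let q : ℝ → ℝ := fun x => 2 * max (φ x) 0 * (r + s - 2 * x)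
  have hqc : Continuous q := by fun_prop
  have hwc : Continuous w := by fun_prop
  have hder : ∀ x, HasDerivAt w (q x) x := by
    intro x
    have h1 : HasDerivAt φ (r + s - 2 * x) x := by
      have := ((hasDerivAt_id x).sub_const s).mul ((hasDerivAt_id x).const_sub r)
      refine HasDerivAt.congr_deriv (f := φ) this ?_
      show 1 * (r - x) + (x - s) * (-1) = _
      ring
    exact (aux_deriv_sq (φ x)).comp x h1
  have hout : ∀ x, x ∉ Icc s r → w x = 0 := by
    intro x hx
    have : φ x ≤ 0 := by
      simp only [mem_Icc, not_and_or, not_le] at hx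
      simp only [φ]
      rcases hx with h | h <;> nlinarith
    simp [w, max_eq_right this]
  have hw0 : w 0 = 0 := by
    have : φ 0 ≤ 0 := by simp only [φ]; nlinarith
    simp [w, max_eq_right this]
  have hwT : w T = 0 := by
    have : φ T ≤ 0 := by simp only [φ]; nlinarith
    simp [w, max_eq_right this]
  let p0 : C(Icc (0:ℝ) T, ℝ) := ⟨fun x => q x, by fun_prop⟩
  have hae : ∀ᵐ t, t ∈ Icc 0 T → (0 ≤ a t ∨ w t = 0) := by
    rw [ae_restrict_iff' measurableSet_Icc] at hpi
    filter_upwards [hpi] with t ht _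
    by_cases h : t ∈ Icc s r
    · exact Or.inl (ht h)
    · exact Or.inr (hout t h)
  refine ⟨p0, w, hwc, ?_, fun x => sq_nonneg _, hwT, hae, ?_⟩
  · intro x hx
    have : ∫ t in (0:ℝ)..x, xt hT p0 t = ∫ t in (0:ℝ)..x, q t := by
      apply intervalIntegral.integral_congr
      intro t ht
      rw [uIcc_of_le hx.1] at ht
      exact xt_of_mem hT p0 ⟨ht.1, ht.2.trans hx.2⟩
    rw [this, intervalIntegral.integral_eq_sub_of_hasDerivAt (fun t _ => hder t) (hqc.intervalIntegrable _ _), hw0, sub_zero]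
  · have hi : IntervalIntegrable (fun t => a t * (w t)^2) volume 0 T := ha.mul_continuousOn (by fun_prop)
    have hnn : ∀ᵐ t, t ∈ Icc 0 T → 0 ≤ a t * (w t)^2 := by
      filter_upwards [hae] with t ht htm
      rcases ht htm with h | h
      · positivity
      · rw [h]; simp
    have h1 : ∫ t in (s+δ)..(r-δ), a t * (w t)^2 ≤ ∫ t in (0:ℝ)..T, a t * (w t)^2 := by
      apply intervalIntegral.integral_mono_interval (by linarith) hδ2 (by linarith) _ hi
      rw [EventuallyLE, ae_restrict_iff' measurableSet_Ioc]
      filter_upwards [hnn] with t ht htm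
      exact ht (Ioc_subset_Icc_self htm)
    have hsub : uIcc (s+δ) (r-δ) ⊆ uIcc 0 T := by
      rw [uIcc_of_le hδ2, uIcc_of_le hT.le]
      exact Icc_subset_Icc (by linarith) (by linarith)
    have h2 : ∫ t in (s+δ)..(r-δ), a t * (δ^4)^2 ≤ ∫ t in (s+δ)..(r-δ), a t * (w t)^2 := by
      apply intervalIntegral.integral_mono_ae_restrict hδ2 ((ha.mono_set hsub).mul_const _) (hi.mono_set hsub)
      rw [EventuallyLE, ae_restrict_iff' measurableSet_Icc]
      rw [ae_restrict_iff' measurableSet_Icc] at hpi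
      filter_upwards [hpi] with t ht htm
      have h3 : 0 ≤ a t := ht ⟨by linarith [htm.1], by linarith [htm.2]⟩
      apply mul_le_mul_of_nonneg_left _ h3
      apply pow_le_pow_left₀ (by positivity)
      have h4 : δ^2 ≤ max (φ t) 0 := by
        refine le_trans ?_ (le_max_left _ _)
        simp only [φ]
        nlinarith [htm.1, htm.2]
      have h5 : (δ^2)^2 ≤ (max (φ t) 0)^2 := pow_le_pow_left₀ (by positivity) h4 2
      calc δ^4 = (δ^2)^2 := by ring
        _ ≤ _ := h5
    rw [intervalIntegral.integral_mul_const] at h2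
    have : 0 < (∫ t in (s+δ)..(r-δ), a t) * (δ^4)^2 := mul_pos hA (by positivity)
    linarith

lemma aux_end {T : ℝ} (hT : 0 < T) {a : ℝ → ℝ} (ha : IntervalIntegrable a volume 0 T) (e : ℝ)
    {p0 : C(Icc (0:ℝ) T, ℝ)} {w : ℝ → ℝ} (hwc : Continuous w) (hw : ∀ x ∈ Icc 0 T, ∫ t in (0:ℝ)..x, xt hT p0 t = w x)
    (hw0 : ∀ x, 0 ≤ w x) (hwT : w T = 0) (hae : ∀ᵐ t, t ∈ Icc 0 T → (0 ≤ a t ∨ w t = 0))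
    (hpos : 0 < ∫ t in (0:ℝ)..T, a t * (w t)^2) {M R0 : ℝ} (hM0 : 0 < M)
    (hM : ∫ t in (0:ℝ)..T, (xt hT p0 t)^2 < M * ∫ t in (0:ℝ)..T, a t * (w t)^2)
    {H : C(ℝ, ℝ)} (hH0 : H 0 = 0) (hHM : ∀ s, 0 ≤ s → M / 2 * (s^2 - R0^2) ≤ H s) {ρ : ℝ} (hρ : 0 < ρ) :
    ∃ z : ℝ × C(Icc (0:ℝ) T, ℝ), JJ hT ha H e z < 0 ∧
      ρ < |z.1| + Real.sqrt (T * ∫ t in (0:ℝ)..T, (xt hT z.2 t)^2) := by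
  have hTm : T ∈ Icc 0 T := ⟨hT.le, le_rfl⟩
  set I := ∫ t in (0:ℝ)..T, (xt hT p0 t)^2 with hI
  set W := ∫ t in (0:ℝ)..T, a t * (w t)^2 with hW
  set N := ∫ t in (0:ℝ)..T, |a t| with hN
  have hN0 : 0 ≤ N := intervalIntegral.integral_nonneg hT.le fun _ _ => abs_nonneg _
  have hI0 : 0 ≤ I := intervalIntegral.integral_nonneg hT.le fun _ _ => sq_nonneg _
  have hI1 : 0 < I := by
    rcases hI0.lt_or_eq with h | h
    · exact h
    · exfalso
      have : W = 0 := by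
        refine Eq.trans (b := ∫ t in (0:ℝ)..T, (0:ℝ)) ?_ (by simp)
        apply intervalIntegral.integral_congr
        intro t ht
        rw [uIcc_of_le hT.le] at ht
        have := aux_cs hT (xt_cont hT p0) ht
        rw [← hI, ← h, mul_zero, hw t ht] at this
        have h2 : (w t)^2 = 0 := le_antisymm this (sq_nonneg _)
        simp only [h2, mul_zero]
      linarith
  set k := Real.sqrt (T * I) with hk
  have hk0 : 0 < k := Real.sqrt_pos.2 (by positivity)
  have hg : 0 < M * W - I := by linarith
  set R := 1 + ρ / k + M * R0^2 * N / (M * W - I) with hR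
  have hR1 : 1 ≤ R := by
    have : 0 ≤ ρ / k := by positivity
    have : 0 ≤ M * R0^2 * N / (M * W - I) := by positivity
    linarith
  have hRk : ρ < R * k := by
    have h1 : 0 ≤ M * R0^2 * N / (M * W - I) := by positivity
    have h2 : ρ / k < R := by linarith
    rwa [div_lt_iff₀ hk0] at h2
  have hRg : M * R0^2 * N < R * (M * W - I) := by
    have h1 : 0 ≤ ρ / k := by positivity
    have h2 : M * R0^2 * N / (M * W - I) < R := by linarith
    rwa [div_lt_iff₀ hg] at h2
  have hxR : ∀ t, xt hT (R • p0) t = R * xt hT p0 t := fun t => by simp [xt, IccExtend]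
  have hint0 : ∫ t in (0:ℝ)..T, xt hT p0 t = 0 := by rw [hw T hTm, hwT]
  have hIR : ∫ t in (0:ℝ)..T, (xt hT (R • p0) t)^2 = R^2 * I := by
    simp only [hxR, mul_pow]
    rw [intervalIntegral.integral_const_mul]
  have hU : ∀ x ∈ Icc 0 T, xt hT (UU hT e (0, R • p0)) x = R * w x := by
    intro x hx
    rw [UU_apply hT e _ hx]
    simp only [PE_apply, hxR, intervalIntegral.integral_const_mul, hint0, mul_zero, sub_zero, zero_add, hw x hx]
  refine ⟨(0, R • p0), ?_, ?_⟩
  · rw [JJ_apply, hIR]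
    have e1 : ∫ t in (0:ℝ)..T, (max (-(xt hT (UU hT e (0, R • p0)) t)) 0)^2 = 0 := by
      refine Eq.trans (b := ∫ t in (0:ℝ)..T, (0:ℝ)) ?_ (by simp)
      apply intervalIntegral.integral_congr
      intro t ht
      rw [uIcc_of_le hT.le] at ht
      simp only [hU t ht]
      have := mul_nonneg (by linarith : 0 ≤ R) (hw0 t)
      rw [max_eq_right (by linarith)]; norm_num
    have e2 : ∫ t in (0:ℝ)..T, a t * H (xt hT (UU hT e (0, R • p0)) t) = ∫ t in (0:ℝ)..T, a t * H (R * w t) := by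
      apply intervalIntegral.integral_congr
      intro t ht
      rw [uIcc_of_le hT.le] at ht
      simp only [hU t ht]
    have hi2 : IntervalIntegrable (fun t => a t * (w t)^2) volume 0 T := ha.mul_continuousOn (by fun_prop)
    have h1 : ∫ t in (0:ℝ)..T, ((M/2*R^2) * (a t * (w t)^2) - (M/2*R0^2) * |a t|) ≤ ∫ t in (0:ℝ)..T, a t * H (R * w t) := by
      apply intervalIntegral.integral_mono_ae_restrict hT.le ((hi2.const_mul _).sub (ha.abs.const_mul _))
        (ha.mul_continuousOn (by fun_prop))
      rw [EventuallyLE, ae_restrict_iff' measurableSet_Icc]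
      filter_upwards [hae] with t ht htm
      rcases ht htm with h | h
      · rw [abs_of_nonneg h]
        have h2 := hHM (R * w t) (mul_nonneg (by linarith) (hw0 t))
        have h3 := mul_le_mul_of_nonneg_left h2 h
        calc _ = a t * (M / 2 * ((R * w t)^2 - R0^2)) := by ring
          _ ≤ _ := h3
      · rw [h, mul_zero, hH0]
        have : 0 ≤ (M/2*R0^2) * |a t| := by positivity
        simp; linarith
    rw [intervalIntegral.integral_sub (hi2.const_mul _) (ha.abs.const_mul _), intervalIntegral.integral_const_mul,
      intervalIntegral.integral_const_mul, ← hW, ← hN] at h1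
    rw [e1, e2]
    have h4 : R * (M * W - I) ≤ R^2 * (M * W - I) := by
      apply mul_le_mul_of_nonneg_right _ hg.le
      nlinarith
    nlinarith
  · simp only [abs_zero, zero_add]
    rw [hIR, show T * (R^2 * I) = R^2 * (T * I) by ring, Real.sqrt_mul (sq_nonneg _), Real.sqrt_sq (by linarith)]
    exact hRk


lemma aux_glip {g g' : ℝ → ℝ}
    (hgd : ∀ s ∈ Ici (0:ℝ), HasDerivWithinAt g (g' s) (Ici (0:ℝ)) s) {R k : ℝ}
    (hk : ∀ s ∈ Icc 0 R, |g' s| ≤ k) : ∀ s ∈ Icc 0 R, ∀ t ∈ Icc 0 R, |g s - g t| ≤ k * |s - t| := by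
  intro s hs t ht
  exact Convex.norm_image_sub_le_of_norm_hasDerivWithin_le (f := g) (f' := g') (s := Icc 0 R)
    (fun x hx => (hgd x hx.1).mono Icc_subset_Ici_self) hk (convex_Icc 0 R) ht hs

lemma aux_prim {h : C(ℝ, ℝ)} {M R0 : ℝ} (hM : 0 < M) (hR0 : 0 < R0) (hnn : ∀ s, 0 ≤ h s)
    (h0 : ∀ s ≤ 0, h s = 0) (hp : ∀ s > 0, 0 < h s) (hR : ∀ s, R0 ≤ s → M * s ≤ h s) :
    ∃ H : C(ℝ, ℝ), (∀ s, HasDerivAt H (h s) s) ∧ (∀ s ≤ 0, H s = 0) ∧ Monotone H ∧ (∀ s > 0, 0 < H s) ∧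
      (∀ s, 0 ≤ s → M / 2 * (s^2 - R0^2) ≤ H s) := by
  have hc : Continuous h := h.continuous
  have hd : ∀ s, HasDerivAt (fun x => ∫ t in (0:ℝ)..x, h t) (h s) s := fun s =>
    intervalIntegral.integral_hasDerivAt_right (hc.intervalIntegrable _ _)
      (hc.stronglyMeasurableAtFilter _ _) hc.continuousAt
  let H : C(ℝ, ℝ) := ⟨fun x => ∫ t in (0:ℝ)..x, h t, continuous_iff_continuousAt.2 fun s => (hd s).continuousAt⟩
  have hHd : ∀ s, HasDerivAt H (h s) s := hd
  have hmono : Monotone H := monotone_of_hasDerivAt_nonneg hHd hnn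
  refine ⟨H, hHd, ?_, hmono, ?_, ?_⟩
  · intro s hs
    show ∫ t in (0:ℝ)..s, h t = 0
    refine Eq.trans (b := ∫ t in (0:ℝ)..s, (0:ℝ)) ?_ (by simp)
    apply intervalIntegral.integral_congr
    intro t ht
    rw [uIcc_of_ge hs] at ht
    exact h0 t ht.2
  · intro s hs
    exact intervalIntegral.intervalIntegral_pos_of_pos_on (hc.intervalIntegrable _ _)
      (fun x hx => hp x hx.1) hs
  · intro s hs
    have hH0 : H 0 = 0 := by show ∫ t in (0:ℝ)..0, h t = 0; simp
    rcases le_total s R0 with h1 | h1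
    · have : 0 ≤ H s := hH0 ▸ hmono hs
      have : s^2 ≤ R0^2 := pow_le_pow_left₀ hs h1 2
      nlinarith
    · have h2 : 0 ≤ H R0 := hH0 ▸ hmono hR0.le
      have h3 : MonotoneOn (fun x => H x - M / 2 * x^2) (Ici R0) := by
        apply monotoneOn_of_hasDerivWithinAt_nonneg (convex_Ici R0) (f' := fun x => h x - M * x)
        · fun_prop
        · intro x _
          have := (hHd x).sub ((hasDerivAt_pow 2 x).const_mul (M/2))
          refine (this.congr_deriv ?_).hasDerivWithinAt
          push_cast; ring
        · intro x hx
          rw [interior_Ici] at hx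
          have := hR x (le_of_lt hx)
          linarith
      have h4 := h3 (mem_Ici.2 le_rfl) (mem_Ici.2 h1) h1
      simp only at h4
      nlinarith

lemma aux_trunc {g g' : ℝ → ℝ}
    (hg0 : g 0 = 0) (hgpos : ∀ s : ℝ, 0 < s → 0 < g s)
    (hgd : ∀ s ∈ Ici (0:ℝ), HasDerivWithinAt g (g' s) (Ici (0:ℝ)) s)
    (hgdc : ContinuousOn g' (Ici (0:ℝ)))
    (hlim0 : Tendsto (fun s => g s / s) (nhdsWithin 0 (Ioi 0)) (nhds 0))
    (hliminfty : Tendsto (fun s => g s / s) atTop atTop) {M C : ℝ} (hM : 0 < M) (hC : 1 ≤ C) :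
    ∃ (h : C(ℝ, ℝ)) (K R0 B0 : ℝ), 0 ≤ K ∧ 0 < R0 ∧ (∀ s t, |h s - h t| ≤ K * |s - t|) ∧
      (∀ s, 0 ≤ h s) ∧ (∀ s ≤ 0, h s = 0) ∧ (∀ s > 0, 0 < h s) ∧ (∀ s, R0 ≤ s → M * s ≤ h s) ∧
      (∀ s, |h s - M * max s 0| ≤ B0) ∧ (∀ s ∈ Icc 0 (C * R0), h s = g s) ∧
      (∀ ε > 0, ∃ ρ > 0, ∀ s ≤ ρ, ∀ t ≤ ρ, |h s - h t| ≤ ε * |s - t|) := by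
  have hgc : ContinuousOn g (Ici 0) := fun s h => (hgd s h).continuousWithinAt
  have hgnn : ∀ s, 0 ≤ s → 0 ≤ g s := by
    intro s hs
    rcases hs.eq_or_lt with h | h
    · rw [← h, hg0]
    · exact (hgpos s h).le
  obtain ⟨R0, hR0, hR⟩ : ∃ R0 : ℝ, 0 < R0 ∧ ∀ s, R0 ≤ s → M * s ≤ g s := by
    obtain ⟨N, hN⟩ := eventually_atTop.1 (hliminfty.eventually_ge_atTop M)
    refine ⟨max N 1, by positivity, fun s hs => ?_⟩
    have h1 : 0 < s := lt_of_lt_of_le one_pos ((le_max_right _ _).trans hs)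
    have := hN s ((le_max_left _ _).trans hs)
    rwa [le_div_iff₀ h1] at this
  set R1 := C * R0 with hR1
  have hR01 : R0 ≤ R1 := by nlinarith
  have hR1p : 0 < R1 := hR0.trans_le hR01
  obtain ⟨k, hk⟩ : ∃ k, ∀ s ∈ Icc 0 R1, |g' s| ≤ k :=
    isCompact_Icc.exists_bound_of_continuousOn (hgdc.mono Icc_subset_Ici_self)
  obtain ⟨B, hB⟩ : ∃ k, ∀ s ∈ Icc 0 R1, |g s| ≤ k :=
    isCompact_Icc.exists_bound_of_continuousOn (hgc.mono Icc_subset_Ici_self)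
  have hk0 : 0 ≤ k := (abs_nonneg _).trans (hk 0 ⟨le_rfl, hR1p.le⟩)
  have hB0 : 0 ≤ B := (abs_nonneg _).trans (hB 0 ⟨le_rfl, hR1p.le⟩)
  have hl := aux_glip hgd hk
  have hcl : ∀ s : ℝ, min (max s 0) R1 ∈ Icc 0 R1 := fun s => ⟨le_min (le_max_right _ _) hR1p.le, min_le_right _ _⟩
  let f : ℝ → ℝ := fun s => g (min (max s 0) R1) + M * max (s - R1) 0
  have hfl : ∀ s t, |f s - f t| ≤ (k + M) * |s - t| := by
    intro s t
    have h1 := hl _ (hcl s) _ (hcl t)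
    have h2 : |min (max s 0) R1 - min (max t 0) R1| ≤ |s - t| := by
      refine (abs_min_sub_min_le_max _ _ _ _).trans (max_le ?_ (by simp))
      exact (abs_max_sub_max_le_abs s t 0)
    have h3 : |max (s - R1) 0 - max (t - R1) 0| ≤ |s - t| := by
      refine (abs_max_sub_max_le_abs _ _ _).trans ?_
      simp
    calc |f s - f t| = |(g (min (max s 0) R1) - g (min (max t 0) R1)) + M * (max (s - R1) 0 - max (t - R1) 0)| := by
          simp only [f]; congr 1; ring
      _ ≤ |g (min (max s 0) R1) - g (min (max t 0) R1)| + |M * (max (s - R1) 0 - max (t - R1) 0)| := abs_add_le _ _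
      _ ≤ k * |s - t| + M * |s - t| := by
          rw [abs_mul, abs_of_pos hM]
          gcongr
          exact h1.trans (mul_le_mul_of_nonneg_left h2 hk0)
      _ = _ := by ring
  have hfc : Continuous f := by
    have : LipschitzWith (k+M).toNNReal f := LipschitzWith.of_dist_le_mul fun s t => by
      rw [Real.dist_eq, Real.dist_eq, Real.coe_toNNReal _ (by positivity)]; exact hfl s t
    exact this.continuous
  have hfg : ∀ s ∈ Icc 0 R1, f s = g s := by
    intro s hs
    simp only [f]
    rw [max_eq_left hs.1, min_eq_left hs.2, max_eq_right (by linarith [hs.2])]; ring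
  have hfR : ∀ s, R1 ≤ s → f s = g R1 + M * (s - R1) := by
    intro s hs
    simp only [f]
    rw [max_eq_left (hR1p.le.trans hs), min_eq_right hs, max_eq_left (by linarith)]
  have hf0 : ∀ s ≤ 0, f s = 0 := by
    intro s hs
    simp only [f]
    rw [max_eq_right hs, min_eq_left hR1p.le, max_eq_right (by linarith), hg0]; ring
  have hfp : ∀ s > 0, 0 < f s := by
    intro s hs
    rcases le_total s R1 with h | h
    · rw [hfg s ⟨hs.le, h⟩]; exact hgpos s hs
    · rw [hfR s h]
      have := hgpos _ hR1p
      have : 0 ≤ M * (s - R1) := mul_nonneg hM.le (by linarith)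
      linarith
  have hg'0 : g' 0 = 0 := by
    have h1 := (hasDerivWithinAt_iff_tendsto_slope.1 (hgd 0 self_mem_Ici))
    have h2 : Ici (0:ℝ) \ {0} = Ioi 0 := by ext x; simp [lt_iff_le_and_ne, eq_comm]
    rw [h2] at h1
    refine tendsto_nhds_unique h1 (hlim0.congr fun s => ?_)
    simp [slope_def_field, hg0]
  refine ⟨⟨f, hfc⟩, k + M, R0, B + M * R1, by positivity, hR0, hfl, ?_, hf0, hfp, ?_, ?_, hfg, ?_⟩
  · intro s
    rcases le_or_gt s 0 with h | h
    · exact (hf0 s h).ge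
    · exact (hfp s h).le
  · intro s hs
    show M * s ≤ f s
    rcases le_total s R1 with h | h
    · rw [hfg s ⟨by linarith, h⟩]; exact hR s hs
    · rw [hfR s h]
      have := hR R1 hR01
      linarith
  · intro s
    show |f s - M * max s 0| ≤ _
    have hMR : 0 ≤ M * R1 := by positivity
    rcases le_total s 0 with h0 | h0
    · rw [hf0 s h0, max_eq_right h0]; simp; linarith
    · rw [max_eq_left h0]
      rcases le_total s R1 with h | h
      · rw [hfg s ⟨h0, h⟩]
        have h1 := abs_le.1 (hB s ⟨h0, h⟩)
        have h2 : M * s ≤ M * R1 := mul_le_mul_of_nonneg_left h hM.le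
        have h3 : 0 ≤ M * s := by positivity
        rw [abs_le]; constructor <;> linarith
      · rw [hfR s h]
        have h1 := abs_le.1 (hB R1 ⟨hR1p.le, le_rfl⟩)
        rw [abs_le]; constructor <;> linarith
  · intro ε hε
    have h1 := Metric.continuousWithinAt_iff.1 (hgdc 0 self_mem_Ici) ε hε
    obtain ⟨δ, hδ, h2⟩ := h1
    refine ⟨min (δ/2) R1, by positivity, ?_⟩
    have h3 : ∀ s ∈ Icc 0 (min (δ/2) R1), |g' s| ≤ ε := by
      intro s hs
      have := h2 (x := s) hs.1 (by
        rw [Real.dist_eq, sub_zero, abs_of_nonneg hs.1]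
        have := hs.2.trans (min_le_left _ _)
        linarith)
      rw [hg'0, Real.dist_eq, sub_zero] at this
      exact this.le
    have h4 := aux_glip hgd h3
    have hm0 : 0 ≤ min (δ/2) R1 := by positivity
    have h5 : ∀ s ≤ min (δ/2) R1, f s = g (max s 0) := by
      intro s hs
      rcases le_total s 0 with h | h
      · rw [hf0 s h, max_eq_right h, hg0]
      · rw [max_eq_left h, hfg s ⟨h, hs.trans (min_le_right _ _)⟩]
    intro s hs t ht
    show |f s - f t| ≤ _
    rw [h5 s hs, h5 t ht]
    exact (h4 _ ⟨le_max_right _ _, max_le hs hm0⟩ _ ⟨le_max_right _ _, max_le ht hm0⟩).trans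
      (mul_le_mul_of_nonneg_left (abs_max_sub_max_le_abs s t 0) hε.le)


lemma aux_exist {T : ℝ} (hT : 0 < T) {g g' : ℝ → ℝ}
    (hg0 : g 0 = 0) (hgpos : ∀ s : ℝ, 0 < s → 0 < g s)
    (hgd : ∀ s ∈ Ici (0:ℝ), HasDerivWithinAt g (g' s) (Ici (0:ℝ)) s)
    (hgdc : ContinuousOn g' (Ici (0:ℝ)))
    (hlim0 : Tendsto (fun s => g s / s) (nhdsWithin 0 (Ioi 0)) (nhds 0))
    (hliminfty : Tendsto (fun s => g s / s) atTop atTop)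
    {a : ℝ → ℝ} (ha : IntervalIntegrable a volume 0 T) (ha1 : CondA1 T a)
    (hneg : (∫ x in (0:ℝ)..T, a x) < 0) {e : ℝ} (he : e = 0 ∨ e = 1) :
    ∃ u p : ℝ → ℝ, IsSolOn T (fun t => a t * g (u t)) u p ∧ (∀ x ∈ Icc 0 T, 0 < u x) ∧ BCond T u p ∧
      (e = 0 → p 0 = 0) ∧ (e = 1 → u 0 = u T) := by
  have he0 : 0 ≤ e := by rcases he with rfl | rfl <;> norm_num
  have he1 : e ≤ 1 := by rcases he with rfl | rfl <;> norm_num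
  obtain ⟨C, M0, hC, hM0, hap0⟩ := aux_apriori hT ha ha1
  obtain ⟨p0, w, hwc, hw, hw0, hwT, hae, hpos⟩ := aux_bump hT ha ha1
  obtain ⟨M, hMM, hMI⟩ : ∃ M, M0 ≤ M ∧ ∫ t in (0:ℝ)..T, (xt hT p0 t)^2 < M * ∫ t in (0:ℝ)..T, a t * (w t)^2 := by
    refine ⟨max M0 ((∫ t in (0:ℝ)..T, (xt hT p0 t)^2) / (∫ t in (0:ℝ)..T, a t * (w t)^2) + 1), le_max_left _ _, ?_⟩
    rw [← div_lt_iff₀ hpos]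
    exact lt_of_lt_of_le (by linarith) (le_max_right _ _)
  have hM : 0 < M := hM0.trans_le hMM
  have hap : ∀ h : ℝ → ℝ, Continuous h → (∀ s, 0 ≤ h s) → ∀ R : ℝ, 0 < R → (∀ s, R ≤ s → M * s ≤ h s) →
      ∀ u p : ℝ → ℝ, IsSolOn T (fun t => a t * h (u t)) u p → (∀ x ∈ Icc 0 T, 0 ≤ u x) → BCond T u p →
      ∀ x ∈ Icc 0 T, u x ≤ C * R := fun h hc hn R hR hs =>
    hap0 h hc hn R hR fun s h1 =>
      (mul_le_mul_of_nonneg_right hMM (hR.le.trans h1)).trans (hs s h1)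
  obtain ⟨h, K, R0, B0, hK0, hR0, hK, hnn, h0, hp, hhR, hB0, hhg, hε⟩ :=
    aux_trunc hg0 hgpos hgd hgdc hlim0 hliminfty hM hC
  obtain ⟨H, hH, hH0, hHm, hHp, hHM⟩ := aux_prim hM hR0 hnn h0 hp hhR
  obtain ⟨ρ, hρ, α, hα, hsph⟩ := aux_geom hT ha hneg he0 he1 hH hnn hH0 hHm hHp hε
  obtain ⟨v, hv, hvρ⟩ := aux_end hT ha e hwc hw hw0 hwT hae hpos hM hMI (hH0 0 le_rfl) hHM hρ
  obtain ⟨κ, hκ, hdesc⟩ := JJ_desc hT ha hH hK0 hK he0 he1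
  have hev : Continuous fun V : C(Icc (0:ℝ) T, ℝ) => V (rp hT) := (ContinuousMap.evalCLM ℝ (rp hT)).continuous
  let Y : ℝ × C(Icc (0:ℝ) T, ℝ) → ℝ × C(Icc (0:ℝ) T, ℝ) := fun z =>
    κ • (VV hT ha h (UU hT e z) (rp hT), PP hT e (VV hT ha h (UU hT e z)) - z.2)
  have hVc : Continuous fun z => VV hT ha h (UU hT e z) := (VV_cont hT ha h).comp (UU_cont hT e)
  have hYc : Continuous Y :=
    ((hev.comp hVc).prodMk (((PP_cont hT e).comp hVc).sub continuous_snd)).const_smul κ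
  let r : ℝ × C(Icc (0:ℝ) T, ℝ) → ℝ := fun z => |z.1| + Real.sqrt (T * ∫ t in (0:ℝ)..T, (xt hT z.2 t)^2)
  have hrc : Continuous r := by
    have h1 : (fun z : ℝ × C(Icc (0:ℝ) T, ℝ) => ∫ t in (0:ℝ)..T, (xt hT z.2 t)^2) =
        fun z => AI hT (one_ii T) (z.2 * z.2) (rp hT) := by
      funext z
      rw [AI1_apply]
      simp only [sq]
      rfl
    have h2 : Continuous (fun z : ℝ × C(Icc (0:ℝ) T, ℝ) => ∫ t in (0:ℝ)..T, (xt hT z.2 t)^2) := by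
      rw [h1]
      exact hev.comp ((AI hT (one_ii T)).continuous.comp (continuous_snd.mul continuous_snd))
    exact (continuous_fst.abs).add (Real.continuous_sqrt.comp (continuous_const.mul h2))
  have hx0 : ∀ t, xt hT (0 : C(Icc (0:ℝ) T, ℝ)) t = 0 := fun t => rfl
  have hr0 : r 0 = 0 := by simp [r, hx0]
  have hJ0 : JJ hT ha H e 0 = 0 := by
    rw [JJ_apply]
    simp [hx0, hH0 0 le_rfl]
  obtain ⟨z, hz1, hz2⟩ := aux_mp (J := JJ hT ha H e) (r := r) (D := DD hT ha h e) (Φ := fun z => z + Y z)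
    (κ := κ / 2) (α := α) (ρ := ρ) (v := v) (JJ_cont hT ha H e) hrc (continuous_id.add hYc) (by positivity)
    (DD_nonneg hT ha h e)
    (by
      intro z t ht
      rw [add_sub_cancel_left]
      refine (hdesc z t).trans ?_
      have h1 : 0 ≤ t - t^2/2 := by nlinarith [ht.1, ht.2]
      have := mul_nonneg (mul_nonneg hκ.le h1) (DD_nonneg hT ha h e z)
      linarith)
    (by
      intro z
      have := hdesc z 1
      rw [one_smul] at this
      refine this.trans (le_of_eq ?_)
      ring)
    hsph (by rw [hr0]; exact hρ) (by rw [hJ0]; exact hα) hvρ (hv.trans hα)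
  obtain ⟨u, p, hs, hB, hp0, huT, hu0, hne⟩ := aux_critical hT ha he hM hap h0 (hH0 0 le_rfl) hB0 hα hz1 hz2
  have hle := hap h h.continuous hnn R0 hR0 hhR u p hs (fun x _ => hu0 x) hB
  have hst := aux_strict hT ha hK0 (h := h) (fun s hs => by
    have := hK s 0
    rwa [h0 0 le_rfl, sub_zero, sub_zero, abs_of_nonneg hs] at this) h.continuous hs (fun x _ => hu0 x) hB hne
  refine ⟨u, p, ⟨hs.1, hs.2.1, fun x hx => ?_⟩, hst, hB, hp0, huT⟩
  rw [hs.2.2 x hx]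
  congr 1
  apply intervalIntegral.integral_congr
  intro t ht
  rw [uIcc_of_le hx.1] at ht
  have htm : t ∈ Icc 0 T := ⟨ht.1, ht.2.trans hx.2⟩
  simp only [hhg (u t) ⟨hu0 t, hle t htm⟩]

/-- Corollary: for `g` continuously differentiable on `[0,∞)` with `g(0) = 0`,
`g > 0` and `g' > 0` on `(0,∞)`, `g(s)/s → 0` as `s → 0⁺` and `g(s)/s → +∞` as
`s → +∞`, and a weight satisfying (a1), the problem `u'' + a(x) g(u) = 0` has a
positive Neumann (resp. periodic) solution if and only if `∫₀ᵀ a < 0`. -/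
theorem statement_8
    (T : ℝ) (hT : 0 < T)
    (g g' : ℝ → ℝ)
    (hg0 : g 0 = 0) (hgpos : ∀ s : ℝ, 0 < s → 0 < g s)
    (hgd : ∀ s ∈ Ici (0:ℝ), HasDerivWithinAt g (g' s) (Ici (0:ℝ)) s)
    (hgdc : ContinuousOn g' (Ici (0:ℝ)))
    (hgdpos : ∀ s : ℝ, 0 < s → 0 < g' s)
    (hlim0 : Tendsto (fun s => g s / s) (nhdsWithin 0 (Ioi 0)) (nhds 0))
    (hliminfty : Tendsto (fun s => g s / s) atTop atTop)
    (a : ℝ → ℝ) (ha : IntervalIntegrable a volume 0 T)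
    (ha1 : CondA1 T a) :
    (PosSolNeumann T a g ↔ (∫ x in (0:ℝ)..T, a x) < 0) ∧
    (PosSolPeriodic T a g ↔ (∫ x in (0:ℝ)..T, a x) < 0) := by
  have h0m : (0:ℝ) ∈ Icc 0 T := ⟨le_rfl, hT.le⟩
  refine ⟨⟨?_, ?_⟩, ⟨?_, ?_⟩⟩
  · rintro ⟨u, p, hs, hu, h0, h1⟩
    exact aux_necessity hT hgpos hgd hgdc hgdpos ha ha1 hs hu ⟨by rw [h0, h1], Or.inl h0⟩
  · intro hneg
    obtain ⟨u, p, hs, hu, hB, hp0, -⟩ :=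
      aux_exist hT hg0 hgpos hgd hgdc hlim0 hliminfty ha ha1 hneg (e := 0) (Or.inl rfl)
    exact ⟨u, p, hs, hu, hp0 rfl, hB.1.trans (hp0 rfl)⟩
  · rintro ⟨u, p, hs, hu, h0, h1⟩
    exact aux_necessity hT hgpos hgd hgdc hgdpos ha ha1 hs hu ⟨h1.symm, Or.inr h0⟩
  · intro hneg
    obtain ⟨u, p, hs, hu, hB, -, huT⟩ :=
      aux_exist hT hg0 hgpos hgd hgdc hlim0 hliminfty ha ha1 hneg (e := 1) (Or.inr rfl)
    exact ⟨u, p, hs, hu, huT rfl, hB.1.symm⟩
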